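/- For every prime p ≥ 5 and every integer n ≥ 5, Ψ_{n-3}^p(1,1,1) = 23 + 2·gcd(p-1,3) + gcd(p-1,4); that is, the number of isomorphism classes of regular p-groups of type (n-3, 1, 1, 1) equals 23 + 2·gcd(p-1,3) + gcd(p-1,4). -/

import Mathlib

/-- `℧_1(H) = ⟨h^p : h ∈ H⟩` for a subgroup `H`. -/
def MhoOne (p : ℕ) {P : Type} [Group P] (H : Subgroup P) : Subgroup P :=
  Subgroup.closure {y : P | ∃ x ∈ H, y = x ^ p}

/-- A `p`-group `P` is regular if for all `x y : P` there is
`z ∈ ℧_1(γ_2(⟨x,y⟩))` with `x^p * y^p = (x*y)^p * z`. -/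
def IsRegularPGroup (p : ℕ) (P : Type) [Group P] : Prop :=
  ∀ x y : P,
    ∃ z ∈ MhoOne p ⁅Subgroup.closure {x, y}, Subgroup.closure {x, y}⁆,
      x ^ p * y ^ p = (x * y) ^ p * z

/-- `Ω_i(P) = ⟨x : x^(p^i) = 1⟩`. -/
def OmegaSubgroup (p : ℕ) (P : Type) [Group P] (i : ℕ) : Subgroup P :=
  Subgroup.closure {x : P | x ^ p ^ i = 1}

/-- `ω_i(P)`, defined by `p ^ ω_i(P) = |Ω_i(P)/Ω_{i-1}(P)|`. -/
noncomputable def omegaInv (p : ℕ) (P : Type) [Group P] (i : ℕ) : ℕ :=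
  ((OmegaSubgroup p P (i - 1)).relIndex (OmegaSubgroup p P i)).factorization p

/-- `μ_j(P)` (for `j ≥ 1`): the dual partition of `(ω_1(P), ω_2(P), ...)`;
the type invariants of `P` are `μ_1(P) ≥ μ_2(P) ≥ ...`. -/
noncomputable def muInv (p : ℕ) (P : Type) [Group P] (j : ℕ) : ℕ :=
  Nat.card {i : ℕ // 1 ≤ i ∧ j ≤ omegaInv p P i}

/-- `P` has type invariants given by the list `l`. -/
def HasTypeInvariants (p : ℕ) (P : Type) [Group P] (l : List ℕ) : Prop :=
  ∀ i : ℕ, muInv p P (i + 1) = l.getD i 0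

/-- The multiplication extracted from a group structure. -/
def mulOfGroup (G : Type) (s : Group G) : Mul G := by letI := s; infer_instance

/-- The number of isomorphism classes of groups of order `N` whose group structure
satisfies the predicate `Q`. -/
noncomputable def groupClassCount (N : ℕ) (Q : Group (Fin N) → Prop) : ℕ :=
  Nat.card (Quot fun s t : {s : Group (Fin N) // Q s} =>
    Nonempty (@MulEquiv (Fin N) (Fin N) (mulOfGroup _ s.1) (mulOfGroup _ t.1)))

/-- `Ψ_e^p(λ)`: the number of isomorphism classes of regular `p`-groups of type
`(e, λ_1, ..., λ_k)`; such a group has order `p ^ (e + λ_1 + ... + λ_k)`. -/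
noncomputable def PsiType (p e : ℕ) (l : List ℕ) : ℕ :=
  groupClassCount (p ^ (e + l.sum)) fun s =>
    letI := s
    IsRegularPGroup p (Fin (p ^ (e + l.sum))) ∧
      HasTypeInvariants p (Fin (p ^ (e + l.sum))) (e :: l)

/-!
A regular `p`-group of type `(d + 2, 1, 1, 1)` with `p ≥ 5` has nilpotency class at most `4 < p`.
By the Lazard correspondence it is thus the group attached by the Baker-Campbell-Hausdorff series
to a nilpotent Lie ring on `ℤ/p^(d+2) a ⊕ 𝔽_p x ⊕ 𝔽_p y ⊕ 𝔽_p u`. The generators can be adapted to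
a central series so that brackets lie in `Ω₁ = ⟨c, x, y, u⟩`, where `c = p^(d+1) a`, and such a Lie
ring is recorded by nine structure constants. Counting groups thus becomes counting structure
constants up to change of basis. Elementary changes of basis lead to two normal forms, according to
whether `[x, y]` is central; all but one of the coefficients of a normal form can be scaled to `0`
or `1`, and the last one matters only up to multiplication by `k`-th powers of units, with
`k ∈ {1, 2, 3, 4}`; the cosets of the `k`-th powers give the terms `gcd(p - 1, k)`.
-/

/-! ### Lie rings given by structure constants -/

/-- Structure constants of the nilpotent Lie ring `L = ℤ/p^(d+2) a ⊕ 𝔽_p x ⊕ 𝔽_p y ⊕ 𝔽_p u`, with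
`c = p^(d+1) a`: the field `ijk` is the coefficient of `k` in `[i, j]`, and the coefficients without
a field vanish. -/
@[ext] structure LieConst (p : ℕ) where
  xyu : ZMod p
  xyc : ZMod p
  xuc : ZMod p
  ayu : ZMod p
  ayc : ZMod p
  auc : ZMod p
  axy : ZMod p
  axu : ZMod p
  axc : ZMod p
  jacobi : xyu * auc = ayu * xuc

section PrimeFieldUnits

variable {p : ℕ} [Fact (5 ≤ p)]

lemma natCast_zmod_ne_zero_of_lt_five {k : ℕ} (hk : k ≠ 0) (hk5 : k < 5) : (k : ZMod p) ≠ 0 :=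
  fun h => Nat.not_dvd_of_pos_of_lt (Nat.pos_of_ne_zero hk)
    (hk5.trans_le (Fact.out : 5 ≤ p)) ((ZMod.natCast_eq_zero_iff k p).1 h)

lemma two_ne_zero_zmod : (2 : ZMod p) ≠ 0 := by
  exact_mod_cast natCast_zmod_ne_zero_of_lt_five (p := p) (k := 2) (by norm_num) (by norm_num)

lemma three_ne_zero_zmod : (3 : ZMod p) ≠ 0 := by
  exact_mod_cast natCast_zmod_ne_zero_of_lt_five (p := p) (k := 3) (by norm_num) (by norm_num)

lemma twelve_ne_zero_zmod [Fact p.Prime] : (12 : ZMod p) ≠ 0 := by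
  rw [show (12 : ZMod p) = 2 * 2 * 3 by norm_num]
  exact mul_ne_zero (mul_ne_zero two_ne_zero_zmod two_ne_zero_zmod) three_ne_zero_zmod

end PrimeFieldUnits

namespace LieConst

variable {p : ℕ}

section Bracket

variable (θ : LieConst p)

/-- The Lie bracket of `L` as a map `L/pL × L/pL → Ω₁(L)`. An element of `L/pL` is given by its
coordinates in the basis `a, x, y, u`, an element of `Ω₁(L)` by those in the basis `c, x, y, u`. -/
def bracket : (Fin 4 → ZMod p) →ₗ[ZMod p] (Fin 4 → ZMod p) →ₗ[ZMod p] (Fin 4 → ZMod p) :=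
  LinearMap.mk₂ _ (fun w v =>
    ![θ.xyc * (w 1 * v 2 - w 2 * v 1) + θ.xuc * (w 1 * v 3 - w 3 * v 1)
        + θ.axc * (w 0 * v 1 - w 1 * v 0) + θ.ayc * (w 0 * v 2 - w 2 * v 0)
        + θ.auc * (w 0 * v 3 - w 3 * v 0),
      0,
      θ.axy * (w 0 * v 1 - w 1 * v 0),
      θ.xyu * (w 1 * v 2 - w 2 * v 1) + θ.axu * (w 0 * v 1 - w 1 * v 0)
        + θ.ayu * (w 0 * v 2 - w 2 * v 0)])
    (fun w w' v => by ext i; fin_cases i <;> simp <;> ring)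
    (fun r w v => by ext i; fin_cases i <;> simp <;> ring)
    (fun w v v' => by ext i; fin_cases i <;> simp <;> ring)
    (fun r w v => by ext i; fin_cases i <;> simp <;> ring)

@[simp] lemma bracket_zero (w v : Fin 4 → ZMod p) : θ.bracket w v 0 =
    θ.xyc * (w 1 * v 2 - w 2 * v 1) + θ.xuc * (w 1 * v 3 - w 3 * v 1)
      + θ.axc * (w 0 * v 1 - w 1 * v 0) + θ.ayc * (w 0 * v 2 - w 2 * v 0)
      + θ.auc * (w 0 * v 3 - w 3 * v 0) := rfl

@[simp] lemma bracket_one (w v : Fin 4 → ZMod p) : θ.bracket w v 1 = 0 := rfl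

@[simp] lemma bracket_two (w v : Fin 4 → ZMod p) :
    θ.bracket w v 2 = θ.axy * (w 0 * v 1 - w 1 * v 0) := rfl

@[simp] lemma bracket_three (w v : Fin 4 → ZMod p) : θ.bracket w v 3 =
    θ.xyu * (w 1 * v 2 - w 2 * v 1) + θ.axu * (w 0 * v 1 - w 1 * v 0)
      + θ.ayu * (w 0 * v 2 - w 2 * v 0) := rfl

lemma bracket_swap (w v : Fin 4 → ZMod p) : θ.bracket w v = -θ.bracket v w := by
  ext i
  fin_cases i <;> simp <;> ring

@[simp] lemma bracket_self (w : Fin 4 → ZMod p) : θ.bracket w w = 0 := by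
  ext i
  fin_cases i <;> simp <;> ring

/-- The map `Ω₁(L) → L/pL` induced by the inclusion, in coordinates; it kills `c`. -/
def toMod : (Fin 4 → ZMod p) →ₗ[ZMod p] (Fin 4 → ZMod p) where
  toFun v := ![0, v 1, v 2, v 3]
  map_add' w v := by ext i; fin_cases i <;> simp
  map_smul' r v := by ext i; fin_cases i <;> simp

@[simp] lemma toMod_zero (v : Fin 4 → ZMod p) : toMod v 0 = 0 := rfl
@[simp] lemma toMod_one (v : Fin 4 → ZMod p) : toMod v 1 = v 1 := rfl
@[simp] lemma toMod_two (v : Fin 4 → ZMod p) : toMod v 2 = v 2 := rfl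
@[simp] lemma toMod_three (v : Fin 4 → ZMod p) : toMod v 3 = v 3 := rfl

lemma toMod_single (r : ZMod p) : toMod (Pi.single 0 r) = 0 := by
  ext i
  fin_cases i <;> simp

/-- The adjoint action of `L/pL` on `Ω₁(L)`. -/
def ad (w : Fin 4 → ZMod p) : Module.End (ZMod p) (Fin 4 → ZMod p) :=
  θ.bracket w ∘ₗ toMod

lemma ad_apply (w v : Fin 4 → ZMod p) : θ.ad w v = θ.bracket w (toMod v) := rfl

/-- The Baker-Campbell-Hausdorff series `log (exp w * exp v) - w - v`, which stops in degree four
because `L` has nilpotency class at most four. -/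
def bch [Fact p.Prime] (w v : Fin 4 → ZMod p) : Fin 4 → ZMod p :=
  (1 / 2 : ZMod p) • θ.bracket w v
    + (1 / 12 : ZMod p) • (θ.ad w (θ.bracket w v) - θ.ad v (θ.bracket w v))
    - (1 / 24 : ZMod p) • θ.ad v (θ.ad w (θ.bracket w v))

lemma bch_eq_zero [Fact p.Prime] {w v : Fin 4 → ZMod p} (h : θ.bracket w v = 0) :
    θ.bch w v = 0 := by
  simp [bch, h]

/-- The Lie ring in which every bracket is multiplied by `r`. -/
def smulBracket (r : ZMod p) : LieConst p where
  xyu := r * θ.xyu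
  xyc := r * θ.xyc
  xuc := r * θ.xuc
  ayu := r * θ.ayu
  ayc := r * θ.ayc
  auc := r * θ.auc
  axy := r * θ.axy
  axu := r * θ.axu
  axc := r * θ.axc
  jacobi := by linear_combination r ^ 2 * θ.jacobi

end Bracket

lemma actions_proportional [Fact p.Prime] (θ : LieConst p) :
    (∃ g, θ.auc = g * θ.xuc ∧ θ.ayu = g * θ.xyu) ∨
      (θ.xyu = 0 ∧ θ.xuc = 0) ∨ (θ.xuc = 0 ∧ θ.auc = 0) := by
  have h := θ.jacobi
  by_cases hxuc : θ.xuc = 0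
  · rw [hxuc, mul_zero, mul_eq_zero] at h
    tauto
  · refine .inl ⟨θ.auc / θ.xuc, by field_simp, ?_⟩
    field_simp
    linear_combination -h

variable [Fact p.Prime] [Fact (5 ≤ p)]

lemma bch_smulBracket (θ : LieConst p) (w v : Fin 4 → ZMod p) :
    (θ.smulBracket 12).bch w v = (6 : ZMod p) • θ.bracket w v
      + (12 : ZMod p) • (θ.ad w (θ.bracket w v) - θ.ad v (θ.bracket w v))
      - (72 : ZMod p) • θ.ad v (θ.ad w (θ.bracket w v)) := by
  have hbr : ∀ w v, (θ.smulBracket 12).bracket w v = (12 : ZMod p) • θ.bracket w v := fun w v => by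
    ext i
    fin_cases i <;> simp [smulBracket] <;> ring
  have had : ∀ (r : ZMod p) w v, (θ.smulBracket 12).ad w (r • v) = (12 * r) • θ.ad w v :=
    fun r w v => by rw [map_smul, ad_apply, ad_apply, hbr, smul_smul, mul_comm]
  have h24 : (24 : ZMod p) ≠ 0 := by
    rw [show (24 : ZMod p) = 2 * 12 by norm_num]
    exact mul_ne_zero two_ne_zero_zmod twelve_ne_zero_zmod
  have h6 : (1 / 2 : ZMod p) * 12 = 6 := by
    rw [div_mul_eq_mul_div, div_eq_iff two_ne_zero_zmod]
    norm_num
  have h12 : (1 / 12 : ZMod p) * (12 * 12) = 12 := by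
    rw [one_div_mul_eq_div, mul_div_cancel_right₀ _ twelve_ne_zero_zmod]
  have h72 : (1 / 24 : ZMod p) * (12 * (12 * 12)) = 72 := by
    rw [div_mul_eq_mul_div, div_eq_iff h24]
    norm_num
  simp only [bch, hbr, had, smul_sub, smul_smul, h6, h12, h72]

-- In the scaled bracket every coefficient of the series is an integer, so `ring` needs no division.
set_option maxHeartbeats 1000000 in
-- The identity in the `c`-coordinate has several hundred monomials.
lemma bch_assoc (θ : LieConst p) (w v s : Fin 4 → ZMod p) :
    θ.bch w v + θ.bch (w + v + toMod (θ.bch w v)) s =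
      θ.bch v s + θ.bch w (v + s + toMod (θ.bch v s)) := by
  obtain ⟨ϑ, rfl⟩ : ∃ ϑ : LieConst p, θ = ϑ.smulBracket 12 :=
    ⟨θ.smulBracket 12⁻¹, by ext <;> simp [smulBracket, twelve_ne_zero_zmod]⟩
  simp only [bch_smulBracket]
  ext i
  fin_cases i <;> simp only [ad_apply, Fin.zero_eta, Fin.mk_one, Fin.reduceFinMk, Fin.isValue,
    Pi.add_apply, Pi.sub_apply, Pi.smul_apply, smul_eq_mul, bracket_zero, bracket_one, bracket_two,
    bracket_three, toMod_zero, toMod_one, toMod_two, toMod_three]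
  · obtain ⟨g, hauc, hayu⟩ | ⟨h₁, h₂⟩ | ⟨h₁, h₂⟩ := ϑ.actions_proportional
    · rw [hauc, hayu]
      ring
    all_goals
      rw [h₁, h₂]
      ring
  all_goals ring

end LieConst

/-! ### The Baker-Campbell-Hausdorff group of a Lie ring -/

section Socle

variable (p d : ℕ)

/-- The isomorphism from `𝔽_p` onto the socle of `ℤ/p^(d+2)`, as a map into `ℤ/p^(d+2)`. -/
def socleHom : ZMod p →+ ZMod (p ^ (d + 2)) :=
  ZMod.lift p ⟨zmultiplesHom _ ((p : ZMod (p ^ (d + 2))) ^ (d + 1)), by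
    have h := ZMod.natCast_self (p ^ (d + 2))
    push_cast at h
    rw [zmultiplesHom_apply, natCast_zsmul, nsmul_eq_mul, ← pow_succ', h]⟩

/-- Reduction modulo `p`. -/
def modHom : ZMod (p ^ (d + 2)) →+* ZMod p :=
  ZMod.castHom (dvd_pow_self p (by omega)) (ZMod p)

variable {p d}

lemma socleHom_intCast (i : ℤ) :
    socleHom p d (i : ZMod p) = i * (p : ZMod (p ^ (d + 2))) ^ (d + 1) := by
  simp [socleHom]

@[simp] lemma modHom_socleHom (r : ZMod p) : modHom p d (socleHom p d r) = 0 := by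
  obtain ⟨i, rfl⟩ := ZMod.intCast_surjective r
  rw [socleHom_intCast]
  simp

lemma modHom_surjective : Function.Surjective (modHom p d) :=
  ZMod.castHom_surjective _

lemma pow_succ_mul_eq_socleHom (t : ZMod (p ^ (d + 2))) :
    (p : ZMod (p ^ (d + 2))) ^ (d + 1) * t = socleHom p d (modHom p d t) := by
  obtain ⟨i, rfl⟩ := ZMod.intCast_surjective t
  rw [map_intCast, socleHom_intCast, mul_comm]

variable [hp : Fact p.Prime]

lemma socleHom_injective : Function.Injective (socleHom p d) := by
  refine (injective_iff_map_eq_zero _).2 fun r hr => ?_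
  obtain ⟨i, rfl⟩ := ZMod.intCast_surjective r
  rw [socleHom_intCast] at hr
  have hdvd : ((i * (p : ℤ) ^ (d + 1) : ℤ) : ZMod (p ^ (d + 2))) = 0 := by push_cast; exact hr
  rw [ZMod.intCast_zmod_eq_zero_iff_dvd] at hdvd ⊢
  push_cast at hdvd
  rw [pow_succ' (p : ℤ) (d + 1)] at hdvd
  exact (mul_dvd_mul_iff_right (pow_ne_zero _ (by exact_mod_cast hp.out.ne_zero))).1 hdvd

lemma exists_socleHom_of_mul_eq_zero {t : ZMod (p ^ (d + 2))}
    (h : (p : ZMod (p ^ (d + 2))) * t = 0) : ∃ r, socleHom p d r = t := by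
  obtain ⟨i, rfl⟩ := ZMod.intCast_surjective t
  have hdvd : ((p * i : ℤ) : ZMod (p ^ (d + 2))) = 0 := by push_cast; exact h
  rw [ZMod.intCast_zmod_eq_zero_iff_dvd] at hdvd
  push_cast at hdvd
  rw [pow_succ', mul_dvd_mul_iff_left (by exact_mod_cast hp.out.ne_zero)] at hdvd
  obtain ⟨j, rfl⟩ := hdvd
  exact ⟨j, by rw [socleHom_intCast]; push_cast; ring⟩

end Socle

/-- The additive group of the Lie ring `L`, in the coordinates `a, x, y, u`. -/
abbrev Carrier (p d : ℕ) : Type := ZMod (p ^ (d + 2)) × ZMod p × ZMod p × ZMod p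

namespace Carrier

open LieConst (toMod)

variable (p d : ℕ)

/-- The inclusion `Ω₁(L) → L`. -/
def incl : (Fin 4 → ZMod p) →+ Carrier p d where
  toFun v := (socleHom p d (v 0), v 1, v 2, v 3)
  map_zero' := by simp
  map_add' v w := by simp

/-- The projection `L → L/pL`. -/
def proj : Carrier p d →+ (Fin 4 → ZMod p) where
  toFun l := ![modHom p d l.1, l.2.1, l.2.2.1, l.2.2.2]
  map_zero' := by ext i; fin_cases i <;> simp
  map_add' v w := by ext i; fin_cases i <;> simp

variable {p d}

@[simp] lemma proj_incl (v : Fin 4 → ZMod p) : proj p d (incl p d v) = toMod v := by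
  ext i
  fin_cases i <;> simp [incl, proj]

lemma pow_succ_nsmul (l : Carrier p d) :
    p ^ (d + 1) • l = incl p d ![proj p d l 0, 0, 0, 0] := by
  ext
  · simp [incl, proj, nsmul_eq_mul, pow_succ_mul_eq_socleHom]
  all_goals simp [incl]

lemma nsmul_incl (v : Fin 4 → ZMod p) : p • incl p d v = 0 := by
  rw [← map_nsmul, show p • v = 0 by ext i; simp [nsmul_eq_mul], map_zero]

lemma proj_surjective : Function.Surjective (proj p d) := fun w => by
  obtain ⟨t, ht⟩ := modHom_surjective (d := d) (w 0)
  exact ⟨(t, w 1, w 2, w 3), by ext i; fin_cases i <;> simp [proj, ht]⟩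

lemma card_eq : Nat.card (Carrier p d) = p ^ (d + 5) := by
  simp only [Nat.card_prod, Nat.card_zmod]
  ring

variable [hp : Fact p.Prime]

lemma incl_injective : Function.Injective (incl p d) := by
  intro v w h
  simp only [incl, AddMonoidHom.coe_mk, ZeroHom.coe_mk, Prod.mk.injEq] at h
  obtain ⟨h0, h1, h2, h3⟩ := h
  ext i
  fin_cases i
  exacts [socleHom_injective h0, h1, h2, h3]

lemma exists_incl_of_nsmul_eq_zero {l : Carrier p d} (h : p • l = 0) : ∃ v, incl p d v = l := by
  obtain ⟨r, hr⟩ := exists_socleHom_of_mul_eq_zero (t := l.1)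
    (by simpa [nsmul_eq_mul] using congrArg Prod.fst h)
  exact ⟨![r, l.2.1, l.2.2.1, l.2.2.2], by simp [incl, hr]⟩

instance : Finite (Carrier p d) :=
  Nat.finite_of_card_ne_zero (by rw [card_eq]; exact pow_ne_zero _ hp.out.ne_zero)

end Carrier

open Carrier (incl proj)
open LieConst (toMod)

/-- The group on `L` with the Baker-Campbell-Hausdorff multiplication. -/
@[ext] structure BCHGroup {p : ℕ} (d : ℕ) (θ : LieConst p) where
  log : Carrier p d

namespace BCHGroup

variable {p d : ℕ} {θ : LieConst p}

section Mul

variable [Fact p.Prime]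

instance : Mul (BCHGroup d θ) :=
  ⟨fun w v => ⟨w.log + v.log + incl p d (θ.bch (proj p d w.log) (proj p d v.log))⟩⟩

instance : One (BCHGroup d θ) := ⟨⟨0⟩⟩

instance : Inv (BCHGroup d θ) := ⟨fun w => ⟨-w.log⟩⟩

lemma log_mul (w v : BCHGroup d θ) : (w * v).log =
    w.log + v.log + incl p d (θ.bch (proj p d w.log) (proj p d v.log)) := rfl

@[simp] lemma log_one : (1 : BCHGroup d θ).log = 0 := rfl

@[simp] lemma log_inv (w : BCHGroup d θ) : (w⁻¹).log = -w.log := rfl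

@[simp] lemma proj_log_mul (w v : BCHGroup d θ) : proj p d (w * v).log =
    proj p d w.log + proj p d v.log + toMod (θ.bch (proj p d w.log) (proj p d v.log)) := by
  simp [log_mul]

variable [Fact (5 ≤ p)]

instance : Group (BCHGroup d θ) := Group.ofLeftAxioms
  (fun w v s => by
    ext1
    rw [log_mul, log_mul w (v * s), proj_log_mul, proj_log_mul, log_mul, log_mul]
    have h := congrArg (incl p d) (θ.bch_assoc (proj p d w.log) (proj p d v.log) (proj p d s.log))
    rw [map_add, map_add] at h
    linear_combination (exp := 1) h)
  (fun w => by ext1; simp [log_mul, θ.bch_eq_zero])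
  (fun w => by ext1; simp [log_mul, θ.bch_eq_zero])

end Mul

end BCHGroup

section TypeInvariants

variable {p : ℕ} {P : Type} [Group P]

lemma mul_pow_pow (hpow : ∀ x y : P, (x * y) ^ p = x ^ p * y ^ p) (i : ℕ) (x y : P) :
    (x * y) ^ p ^ i = x ^ p ^ i * y ^ p ^ i := by
  induction i with
  | zero => simp
  | succ i ih => rw [pow_succ, pow_mul, pow_mul, pow_mul, ih, hpow]

lemma isRegularPGroup_of_mul_pow (hpow : ∀ x y : P, (x * y) ^ p = x ^ p * y ^ p) :
    IsRegularPGroup p P := fun x y => ⟨1, one_mem _, by rw [hpow, mul_one]⟩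

lemma mem_omegaSubgroup_iff (hpow : ∀ x y : P, (x * y) ^ p = x ^ p * y ^ p) {i : ℕ} {x : P} :
    x ∈ OmegaSubgroup p P i ↔ x ^ p ^ i = 1 := by
  refine ⟨fun hx => ?_, fun hx => Subgroup.subset_closure hx⟩
  let powHom : P →* P := ⟨⟨fun x => x ^ p ^ i, one_pow _⟩, mul_pow_pow hpow i⟩
  exact (Subgroup.closure_le powHom.ker).2 (fun _ h => h) hx

lemma card_omegaSubgroup (hpow : ∀ x y : P, (x * y) ^ p = x ^ p * y ^ p) (i : ℕ) :
    Nat.card (OmegaSubgroup p P i) = Nat.card {x : P // x ^ p ^ i = 1} :=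
  Nat.card_congr (Equiv.subtypeEquivRight fun _ => mem_omegaSubgroup_iff hpow)

lemma omegaSubgroup_zero : OmegaSubgroup p P 0 = ⊥ := by
  simp [OmegaSubgroup]

lemma omegaSubgroup_le_succ (i : ℕ) : OmegaSubgroup p P i ≤ OmegaSubgroup p P (i + 1) :=
  Subgroup.closure_mono fun x (hx : x ^ p ^ i = 1) =>
    show x ^ p ^ (i + 1) = 1 by rw [pow_succ, pow_mul, hx, one_pow]

lemma card_omegaSubgroup_mul_relIndex (i : ℕ) :
    Nat.card (OmegaSubgroup p P i) * (OmegaSubgroup p P i).relIndex (OmegaSubgroup p P (i + 1)) =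
      Nat.card (OmegaSubgroup p P (i + 1)) := by
  rw [← Subgroup.relIndex_bot_left, ← Subgroup.relIndex_bot_left,
    Subgroup.relIndex_mul_relIndex _ _ _ bot_le (omegaSubgroup_le_succ i)]

lemma omegaInv_succ_eq [hp : Fact p.Prime] {i m k : ℕ}
    (hi : Nat.card (OmegaSubgroup p P i) = p ^ m)
    (hi' : Nat.card (OmegaSubgroup p P (i + 1)) = p ^ (m + k)) : omegaInv p P (i + 1) = k := by
  have h := card_omegaSubgroup_mul_relIndex (p := p) (P := P) i
  rw [hi, hi', pow_add] at h
  rw [omegaInv, Nat.add_sub_cancel, Nat.eq_of_mul_eq_mul_left (pow_pos hp.out.pos m) h,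
    hp.out.factorization_pow]
  simp

lemma muInv_eq_card {j : ℕ} (s : Finset ℕ) (hs : ∀ i, i ∈ s ↔ 1 ≤ i ∧ j ≤ omegaInv p P i) :
    muInv p P j = s.card := by
  rw [muInv, ← Nat.card_congr (Equiv.subtypeEquivRight hs), Nat.card_eq_finsetCard]

lemma hasTypeInvariants_of_omegaInv {e : ℕ} (he : 1 ≤ e)
    (hω : ∀ i, 1 ≤ i → omegaInv p P i = if i = 1 then 4 else if i ≤ e then 1 else 0) :
    HasTypeInvariants p P [e, 1, 1, 1] := by
  have hmid : ∀ j, 2 ≤ j → j ≤ 4 → muInv p P j = 1 := fun j h2 h4 =>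
    muInv_eq_card {1} fun i => by
      rw [Finset.mem_singleton]
      refine ⟨fun hi => by simp [hi, hω, h4], fun ⟨hi, hj⟩ => ?_⟩
      rw [hω i hi] at hj
      split_ifs at hj <;> omega
  intro j
  rcases j with _ | _ | _ | _ | j
  · refine (muInv_eq_card (Finset.Icc 1 e) fun i => ?_).trans (by simp)
    rw [Finset.mem_Icc]
    refine and_congr_right fun hi => ?_
    rw [hω i hi]
    split_ifs <;> omega
  · exact hmid _ le_rfl (by norm_num)
  · exact hmid _ (by norm_num) (by norm_num)
  · exact hmid _ (by norm_num) le_rfl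
  · refine (muInv_eq_card ∅ fun i => ?_).trans (by simp)
    refine ⟨fun hi => absurd hi (Finset.notMem_empty i), fun ⟨hi, hj⟩ => ?_⟩
    rw [hω i hi] at hj
    split_ifs at hj <;> omega

lemma hasTypeInvariants_of_card_torsion [Fact p.Prime]
    (hpow : ∀ x y : P, (x * y) ^ p = x ^ p * y ^ p) {e : ℕ} (he : 1 ≤ e)
    (hcard : ∀ i, 1 ≤ i → Nat.card {x : P // x ^ p ^ i = 1} = p ^ (3 + min i e)) :
    HasTypeInvariants p P [e, 1, 1, 1] := by
  refine hasTypeInvariants_of_omegaInv he fun i hi => ?_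
  have hΩ : ∀ i, 1 ≤ i → Nat.card (OmegaSubgroup p P i) = p ^ (3 + min i e) :=
    fun i hi => (card_omegaSubgroup hpow i).trans (hcard i hi)
  obtain ⟨i, rfl⟩ := Nat.exists_eq_add_of_le' hi
  rcases Nat.eq_zero_or_pos i with rfl | hi'
  · refine omegaInv_succ_eq (m := 0) (by simp [omegaSubgroup_zero]) ?_
    rw [hΩ _ hi, zero_add, min_eq_left he]
    norm_num
  · refine omegaInv_succ_eq (hΩ i hi') ((hΩ _ hi).trans ?_)
    congr 1
    split_ifs <;> omega

end TypeInvariants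

namespace BCHGroup

variable {p d : ℕ} {θ : LieConst p}

/-- The identification of the underlying set with `L`. -/
def logEquiv : BCHGroup d θ ≃ Carrier p d where
  toFun := log
  invFun := mk
  left_inv _ := rfl
  right_inv _ := rfl

instance [Fact p.Prime] : Finite (BCHGroup d θ) := Finite.of_equiv _ logEquiv.symm

lemma card_eq : Nat.card (BCHGroup d θ) = p ^ (d + 5) :=
  (Nat.card_congr logEquiv).trans Carrier.card_eq

variable [Fact p.Prime]

lemma log_mul_of_bracket_eq_zero {w v : BCHGroup d θ}
    (h : θ.bracket (proj p d w.log) (proj p d v.log) = 0) : (w * v).log = w.log + v.log := by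
  rw [log_mul, θ.bch_eq_zero h, map_zero, add_zero]

variable [Fact (5 ≤ p)]

lemma log_pow (w : BCHGroup d θ) (n : ℕ) : (w ^ n).log = n • w.log := by
  induction n with
  | zero => simp
  | succ n ih =>
    rw [pow_succ, log_mul, ih, map_nsmul, θ.bch_eq_zero (by rw [map_nsmul]; simp), map_zero,
      add_zero, succ_nsmul]

lemma mul_pow_prime (w v : BCHGroup d θ) : (w * v) ^ p = w ^ p * v ^ p := by
  have hpw : θ.bracket (proj p d (w ^ p).log) (proj p d (v ^ p).log) = 0 := by
    rw [log_pow, map_nsmul, show p • proj p d w.log = 0 by ext i; simp [nsmul_eq_mul], map_zero,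
      LinearMap.zero_apply]
  ext1
  rw [log_mul_of_bracket_eq_zero hpw, log_pow, log_pow, log_pow, log_mul, nsmul_add, nsmul_add,
    Carrier.nsmul_incl, add_zero]

lemma card_torsion {i : ℕ} (hi : 1 ≤ i) :
    Nat.card {w : BCHGroup d θ // w ^ p ^ i = 1} = p ^ (3 + min i (d + 2)) := by
  have hi0 : i ≠ 0 := Nat.one_le_iff_ne_zero.1 hi
  have hiff : ∀ w : BCHGroup d θ, w ^ p ^ i = 1 ↔
      w.log ∈ (nsmulAddMonoidHom (α := ZMod (p ^ (d + 2))) (p ^ i)).ker.prod ⊤ := fun w => by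
    rw [BCHGroup.ext_iff, log_pow, Prod.ext_iff, AddSubgroup.mem_prod]
    simp [Prod.ext_iff, hi0]
  rw [Nat.card_congr (logEquiv.subtypeEquiv hiff),
    Nat.card_congr (AddSubgroup.prodEquiv _ _).toEquiv, Nat.card_prod,
    IsAddCyclic.card_nsmulAddMonoidHom_ker]
  have hgcd : (p ^ (d + 2)).gcd (p ^ i) = p ^ min i (d + 2) := by
    rcases le_total i (d + 2) with h | h
    · rw [min_eq_left h, Nat.gcd_eq_right (pow_dvd_pow _ h)]
    · rw [min_eq_right h, Nat.gcd_eq_left (pow_dvd_pow _ h)]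
  simp only [Nat.card_zmod, hgcd, AddSubgroup.card_top, Nat.card_prod]
  ring

lemma isRegularPGroup_and_hasTypeInvariants_of_mulEquiv {H : Type} [Group H]
    (f : H ≃* BCHGroup d θ) : IsRegularPGroup p H ∧ HasTypeInvariants p H [d + 2, 1, 1, 1] := by
  have := Finite.of_equiv _ f.symm.toEquiv
  have hpow (x y : H) : (x * y) ^ p = x ^ p * y ^ p := f.injective (by simp [mul_pow_prime])
  refine ⟨isRegularPGroup_of_mul_pow hpow,
    hasTypeInvariants_of_card_torsion hpow (by omega) fun i hi => ?_⟩
  rw [← card_torsion (d := d) (θ := θ) hi]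
  exact Nat.card_congr (f.toEquiv.subtypeEquiv fun x => by simp [← map_pow])

end BCHGroup

/-! ### Homomorphisms between Baker-Campbell-Hausdorff groups -/

/-- Elements `A, X, Y, U` of the Lie ring `L` of `θ` satisfying the relations of the generators of
the Lie ring of `θ'`, that is, a homomorphism from the latter to `L`; here `A` is recorded modulo
`p`, the other three lie in `Ω₁(L)`, and `C = p^(d+1) A`. -/
structure LieMap {p : ℕ} (θ θ' : LieConst p) where
  A : Fin 4 → ZMod p
  X : Fin 4 → ZMod p
  Y : Fin 4 → ZMod p
  U : Fin 4 → ZMod p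
  bracket_xy : θ.bracket (toMod X) (toMod Y) = θ'.xyu • U + θ'.xyc • Pi.single 0 (A 0)
  bracket_xu : θ.bracket (toMod X) (toMod U) = θ'.xuc • Pi.single 0 (A 0)
  bracket_yu : θ.bracket (toMod Y) (toMod U) = 0
  bracket_ax : θ.bracket A (toMod X) = θ'.axy • Y + θ'.axu • U + θ'.axc • Pi.single 0 (A 0)
  bracket_ay : θ.bracket A (toMod Y) = θ'.ayu • U + θ'.ayc • Pi.single 0 (A 0)
  bracket_au : θ.bracket A (toMod U) = θ'.auc • Pi.single 0 (A 0)

namespace LieMap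

variable {p d : ℕ} {θ θ' : LieConst p} (B : LieMap θ θ')

/-- The map induced on `Ω₁(L)`. -/
def onOmega : (Fin 4 → ZMod p) →ₗ[ZMod p] (Fin 4 → ZMod p) where
  toFun v := v 0 • Pi.single 0 (B.A 0) + v 1 • B.X + v 2 • B.Y + v 3 • B.U
  map_add' v w := by simp only [Pi.add_apply]; module
  map_smul' r v := by simp only [Pi.smul_apply, RingHom.id_apply]; module

lemma onOmega_apply (v : Fin 4 → ZMod p) :
    B.onOmega v = v 0 • Pi.single 0 (B.A 0) + v 1 • B.X + v 2 • B.Y + v 3 • B.U := rfl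

/-- The map induced on `L/pL`. -/
def onMod : (Fin 4 → ZMod p) →ₗ[ZMod p] (Fin 4 → ZMod p) where
  toFun w := w 0 • B.A + w 1 • toMod B.X + w 2 • toMod B.Y + w 3 • toMod B.U
  map_add' v w := by simp only [Pi.add_apply]; module
  map_smul' r v := by simp only [Pi.smul_apply, RingHom.id_apply]; module

lemma onMod_apply (w : Fin 4 → ZMod p) :
    B.onMod w = w 0 • B.A + w 1 • toMod B.X + w 2 • toMod B.Y + w 3 • toMod B.U := rfl

lemma toMod_onOmega (v : Fin 4 → ZMod p) : toMod (B.onOmega v) = B.onMod (toMod v) := by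
  simp [onOmega_apply, onMod_apply, LieConst.toMod_single]

lemma bracket_onMod (w v : Fin 4 → ZMod p) :
    θ.bracket (B.onMod w) (B.onMod v) = B.onOmega (θ'.bracket w v) := by
  simp only [onMod_apply, onOmega_apply, map_add, map_smul, LinearMap.add_apply,
    LinearMap.smul_apply, LieConst.bracket_self, B.bracket_xy, B.bracket_xu, B.bracket_yu,
    B.bracket_ax, B.bracket_ay, B.bracket_au, θ.bracket_swap (toMod B.X) B.A,
    θ.bracket_swap (toMod B.Y) B.A, θ.bracket_swap (toMod B.U) B.A,
    θ.bracket_swap (toMod B.Y) (toMod B.X), θ.bracket_swap (toMod B.U) (toMod B.X),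
    θ.bracket_swap (toMod B.U) (toMod B.Y), LieConst.bracket_zero, LieConst.bracket_one,
    LieConst.bracket_two, LieConst.bracket_three]
  module

lemma ad_onMod (w v : Fin 4 → ZMod p) :
    θ.ad (B.onMod w) (B.onOmega v) = B.onOmega (θ'.ad w v) := by
  rw [LieConst.ad_apply, LieConst.ad_apply, toMod_onOmega, bracket_onMod]

lemma bch_onMod [Fact p.Prime] (w v : Fin 4 → ZMod p) :
    θ.bch (B.onMod w) (B.onMod v) = B.onOmega (θ'.bch w v) := by
  simp only [LieConst.bch, bracket_onMod, ad_onMod, map_add, map_sub, map_smul]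

/-- The map induced on `L`, for a lift `a` of `A`. -/
def onCarrier (a : Carrier p d) : Carrier p d →+ Carrier p d :=
  (ZMod.lift _ ⟨zmultiplesHom _ a, by
    have : (p : ZMod (p ^ (d + 2))) ^ (d + 2) = 0 := mod_cast ZMod.natCast_self _
    ext <;> simp [this]⟩).coprod <|
  (incl p d).comp <| (LinearMap.toSpanSingleton (ZMod p) _ B.X).toAddMonoidHom.coprod <|
    (LinearMap.toSpanSingleton (ZMod p) _ B.Y).toAddMonoidHom.coprod
      (LinearMap.toSpanSingleton (ZMod p) _ B.U).toAddMonoidHom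

lemma onCarrier_intCast (a : Carrier p d) (t : ℤ) (x y u : ZMod p) :
    B.onCarrier a (t, x, y, u) = t • a + incl p d (x • B.X + y • B.Y + u • B.U) := by
  simp [onCarrier, add_assoc]

variable {a : Carrier p d}

lemma proj_onCarrier (ha : proj p d a = B.A) (l : Carrier p d) :
    proj p d (B.onCarrier a l) = B.onMod (proj p d l) := by
  obtain ⟨t, x, y, u⟩ := l
  obtain ⟨t, rfl⟩ := ZMod.intCast_surjective t
  rw [onCarrier_intCast, map_add, map_zsmul, ha, Carrier.proj_incl, onMod_apply]
  simp [proj, add_assoc, ← Int.cast_smul_eq_zsmul (ZMod p)]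

lemma onCarrier_incl (ha : proj p d a = B.A) (v : Fin 4 → ZMod p) :
    B.onCarrier a (incl p d v) = incl p d (B.onOmega v) := by
  obtain ⟨i, hi⟩ := ZMod.intCast_surjective (v 0)
  have hC : (p ^ (d + 1) : ℕ) • a = incl p d (Pi.single 0 (B.A 0)) := by
    rw [Carrier.pow_succ_nsmul, ha]
    congr 1
    ext i
    fin_cases i <;> simp
  have hv : incl p d v =
      (((i * (p ^ (d + 1) : ℕ) : ℤ) : ZMod (p ^ (d + 2))), v 1, v 2, v 3) := by
    simp [incl, ← hi, socleHom_intCast]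
  rw [hv, onCarrier_intCast, mul_smul, natCast_zsmul, hC, ← map_zsmul, ← map_add, onOmega_apply,
    ← hi, Int.cast_smul_eq_zsmul]
  congr 1
  abel

variable [hp : Fact p.Prime]

lemma onCarrier_injective (hB : Function.Injective B.onOmega) (ha : proj p d a = B.A) :
    Function.Injective (B.onCarrier a) := by
  rw [injective_iff_map_eq_zero]
  have hΩ : ∀ l, p • l = 0 → B.onCarrier a l = 0 → l = 0 := fun l hl h => by
    obtain ⟨v, rfl⟩ := Carrier.exists_incl_of_nsmul_eq_zero hl
    rw [B.onCarrier_incl ha, ← map_zero (incl p d)] at h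
    rw [hB ((Carrier.incl_injective h).trans (map_zero _).symm), map_zero]
  have hpow : ∀ k l, p ^ k • l = 0 → B.onCarrier a l = 0 → l = 0 := fun k => by
    induction k with
    | zero => simp
    | succ k ih =>
      intro l hl h
      refine hΩ l (ih _ ?_ ?_) h
      · rwa [← mul_smul, ← pow_succ]
      · rw [map_nsmul, h, smul_zero]
  refine fun l => hpow (d + 5) l ?_
  rw [← Carrier.card_eq (p := p) (d := d)]
  exact card_nsmul_eq_zero'

variable [Fact (5 ≤ p)]

/-- The homomorphism of BCH groups given by a homomorphism of Lie rings. -/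
def toMonoidHom (ha : proj p d a = B.A) : BCHGroup d θ' →* BCHGroup d θ :=
  MonoidHom.mk' (fun w => ⟨B.onCarrier a w.log⟩) fun w v => by
    ext1
    rw [BCHGroup.log_mul, BCHGroup.log_mul, map_add, map_add, B.onCarrier_incl ha,
      B.proj_onCarrier ha, B.proj_onCarrier ha, bch_onMod]

theorem nonempty_mulEquiv (d : ℕ) (B : LieMap θ θ') (hB : Function.Injective B.onOmega) :
    Nonempty (BCHGroup d θ' ≃* BCHGroup d θ) := by
  obtain ⟨a, ha⟩ := Carrier.proj_surjective (d := d) B.A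
  refine ⟨MulEquiv.ofBijective (B.toMonoidHom ha) ?_⟩
  rw [Nat.bijective_iff_injective_and_card]
  exact ⟨fun w v h => BCHGroup.ext (B.onCarrier_injective hB ha (congrArg BCHGroup.log h)),
    BCHGroup.card_eq.trans BCHGroup.card_eq.symm⟩

end LieMap

section Adjoin

variable {G : Type*} [Group G]

/-- The subgroup generated by a normal subgroup `N` and an element `g`. -/
def adjoin (N : Subgroup G) [N.Normal] (g : G) : Subgroup G :=
  (Subgroup.zpowers (g : G ⧸ N)).comap (QuotientGroup.mk' N)

variable {N : Subgroup G} [N.Normal] {g : G}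

lemma self_mem_adjoin : g ∈ adjoin N g := Subgroup.mem_zpowers (g : G ⧸ N)

lemma le_adjoin : N ≤ adjoin N g := fun v hv => by
  rw [adjoin, Subgroup.mem_comap, QuotientGroup.mk'_apply, (QuotientGroup.eq_one_iff v).2 hv]
  exact one_mem _

lemma adjoin_normal (hg : (g : G ⧸ N) ∈ Subgroup.center (G ⧸ N)) : (adjoin N g).Normal := by
  have : (Subgroup.zpowers (g : G ⧸ N)).Normal := ⟨fun v hv h => by
    rwa [Subgroup.mem_center_iff.1 (Subgroup.zpowers_le.2 hg hv) h, mul_inv_cancel_right]⟩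
  exact this.comap _

lemma card_adjoin : Nat.card (adjoin N g) = orderOf (g : G ⧸ N) * Nat.card N := by
  rw [← Nat.card_zpowers, mul_comm]
  exact QuotientGroup.card_preimage_mk N (Subgroup.zpowers (g : G ⧸ N) : Set (G ⧸ N))

lemma card_adjoin_le {m : ℕ} (hm : 0 < m) (hg : g ^ m ∈ N) :
    Nat.card (adjoin N g) ≤ m * Nat.card N := by
  rw [card_adjoin]
  refine Nat.mul_le_mul_right _ (orderOf_le_of_pow_eq_one hm ?_)
  rwa [← QuotientGroup.mk_pow, QuotientGroup.eq_one_iff]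

lemma commute_mk_of_conj {s w : G} (hw : w ∈ N) (h : s * g * s⁻¹ = w * g) :
    Commute (s : G ⧸ N) g := by
  rw [mul_inv_eq_iff_eq_mul] at h
  rw [Commute, SemiconjBy, ← QuotientGroup.mk_mul, h, mul_assoc, QuotientGroup.mk_mul,
    (QuotientGroup.eq_one_iff w).2 hw, one_mul, QuotientGroup.mk_mul]

lemma mk_mem_center_of_closure {S : Set G} (hS : Subgroup.closure S = ⊤)
    (h : ∀ s ∈ S, Commute (s : G ⧸ N) g) : (g : G ⧸ N) ∈ Subgroup.center (G ⧸ N) := by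
  have hle : Subgroup.closure S ≤
      (Subgroup.centralizer {(g : G ⧸ N)}).comap (QuotientGroup.mk' N) :=
    (Subgroup.closure_le _).2 fun s hs => Subgroup.mem_centralizer_singleton_iff.2 (h s hs)
  rw [hS] at hle
  refine Subgroup.mem_center_iff.2 fun v => ?_
  obtain ⟨v, rfl⟩ := QuotientGroup.mk_surjective v
  exact Subgroup.mem_centralizer_singleton_iff.1 (hle (Subgroup.mem_top v))

end Adjoin

lemma bijective_of_map_eq_top {G H : Type*} [Group G] [Group H] [Finite G] {K : Subgroup G}
    {f : G →* H} (hf : K.map f = ⊤) (hK : Nat.card K ≤ Nat.card H) :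
    Function.Bijective (f.comp K.subtype) := by
  have hsurj : Function.Surjective (f.comp K.subtype) := by
    rw [← MonoidHom.range_eq_top, MonoidHom.range_comp, Subgroup.range_subtype, hf]
  exact (Nat.bijective_iff_surjective_and_card _).2
    ⟨hsurj, hK.antisymm (Nat.card_le_card_of_surjective _ hsurj)⟩

/-- The relations that present the BCH groups, with `c = a^(p^(d+1))`. The parameter `κ` collects
the exponents, which are not the structure constants of the Lie ring; see
`LieConst.groupExponents`. -/
structure Relations {p : ℕ} (d : ℕ) (κ : LieConst p) {G : Type*} [Group G] (a x y u c : G) :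
    Prop where
  pow_eq : a ^ p ^ (d + 1) = c
  pow_c : c ^ p = 1
  pow_x : x ^ p = 1
  pow_y : y ^ p = 1
  pow_u : u ^ p = 1
  commute_xc : Commute x c
  commute_yc : Commute y c
  commute_uc : Commute u c
  commute_yu : Commute y u
  conj_xu : x * u * x⁻¹ = c ^ κ.xuc.val * u
  conj_xy : x * y * x⁻¹ = u ^ κ.xyu.val * c ^ κ.xyc.val * y
  conj_au : a * u * a⁻¹ = c ^ κ.auc.val * u
  conj_ay : a * y * a⁻¹ = u ^ κ.ayu.val * c ^ κ.ayc.val * y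
  conj_ax : a * x * a⁻¹ = y ^ κ.axy.val * u ^ κ.axu.val * c ^ κ.axc.val * x

namespace Relations

variable {p d : ℕ} {κ : LieConst p} {G H : Type*} [Group G] [Group H] {a x y u c : G}
  {a' x' y' u' c' : H}

lemma map (R : Relations d κ a x y u c) (f : G →* H) :
    Relations d κ (f a) (f x) (f y) (f u) (f c) where
  pow_eq := by rw [← map_pow, R.pow_eq]
  pow_c := by rw [← map_pow, R.pow_c, map_one]
  pow_x := by rw [← map_pow, R.pow_x, map_one]
  pow_y := by rw [← map_pow, R.pow_y, map_one]
  pow_u := by rw [← map_pow, R.pow_u, map_one]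
  commute_xc := R.commute_xc.map f
  commute_yc := R.commute_yc.map f
  commute_uc := R.commute_uc.map f
  commute_yu := R.commute_yu.map f
  conj_xu := by simpa using congrArg f R.conj_xu
  conj_xy := by simpa using congrArg f R.conj_xy
  conj_au := by simpa using congrArg f R.conj_au
  conj_ay := by simpa using congrArg f R.conj_ay
  conj_ax := by simpa using congrArg f R.conj_ax

lemma of_map {f : G →* H} (hf : Function.Injective f)
    (R : Relations d κ (f a) (f x) (f y) (f u) (f c)) : Relations d κ a x y u c where
  pow_eq := hf (by rw [map_pow, R.pow_eq])
  pow_c := hf (by rw [map_pow, R.pow_c, map_one])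
  pow_x := hf (by rw [map_pow, R.pow_x, map_one])
  pow_y := hf (by rw [map_pow, R.pow_y, map_one])
  pow_u := hf (by rw [map_pow, R.pow_u, map_one])
  commute_xc := R.commute_xc.of_map hf
  commute_yc := R.commute_yc.of_map hf
  commute_uc := R.commute_uc.of_map hf
  commute_yu := R.commute_yu.of_map hf
  conj_xu := hf (by simpa using R.conj_xu)
  conj_xy := hf (by simpa using R.conj_xy)
  conj_au := hf (by simpa using R.conj_au)
  conj_ay := hf (by simpa using R.conj_ay)
  conj_ax := hf (by simpa using R.conj_ax)

lemma prod (R : Relations d κ a x y u c) (R' : Relations d κ a' x' y' u' c') :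
    Relations d κ (a, a') (x, x') (y, y') (u, u') (c, c') where
  pow_eq := Prod.ext R.pow_eq R'.pow_eq
  pow_c := Prod.ext R.pow_c R'.pow_c
  pow_x := Prod.ext R.pow_x R'.pow_x
  pow_y := Prod.ext R.pow_y R'.pow_y
  pow_u := Prod.ext R.pow_u R'.pow_u
  commute_xc := R.commute_xc.prod R'.commute_xc
  commute_yc := R.commute_yc.prod R'.commute_yc
  commute_uc := R.commute_uc.prod R'.commute_uc
  commute_yu := R.commute_yu.prod R'.commute_yu
  conj_xu := Prod.ext R.conj_xu R'.conj_xu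
  conj_xy := Prod.ext R.conj_xy R'.conj_xy
  conj_au := Prod.ext R.conj_au R'.conj_au
  conj_ay := Prod.ext R.conj_ay R'.conj_ay
  conj_ax := Prod.ext R.conj_ax R'.conj_ax

lemma commute_ac (R : Relations d κ a x y u c) : Commute a c :=
  R.pow_eq ▸ Commute.self_pow a _

section Card

variable [hp : Fact p.Prime]

lemma exists_normal_cu (R : Relations d κ a x y u c)
    (hgen : Subgroup.closure {a, x, y, u} = ⊤) :
    ∃ U : Subgroup G, U.Normal ∧ c ∈ U ∧ u ∈ U ∧ Nat.card U ≤ p ^ 2 := by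
  have := adjoin_normal (N := ⊥) (g := c) <| mk_mem_center_of_closure hgen <| by
    rintro s (rfl | rfl | rfl | rfl)
    exacts [R.commute_ac.map (QuotientGroup.mk' ⊥), R.commute_xc.map (QuotientGroup.mk' ⊥),
      R.commute_yc.map (QuotientGroup.mk' ⊥), R.commute_uc.map (QuotientGroup.mk' ⊥)]
  set C := adjoin ⊥ c
  have hcC : c ∈ C := self_mem_adjoin
  refine ⟨adjoin C u, ?_, le_adjoin hcC, self_mem_adjoin, ?_⟩
  · refine adjoin_normal <| mk_mem_center_of_closure hgen ?_
    rintro s (rfl | rfl | rfl | rfl)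
    exacts [commute_mk_of_conj (pow_mem hcC _) R.conj_au,
      commute_mk_of_conj (pow_mem hcC _) R.conj_xu, R.commute_yu.map (QuotientGroup.mk' C), .refl _]
  · have hC : Nat.card C ≤ p * Nat.card (⊥ : Subgroup G) :=
      card_adjoin_le hp.out.pos (Subgroup.mem_bot.2 R.pow_c)
    rw [Subgroup.card_bot, mul_one] at hC
    rw [sq]
    exact (card_adjoin_le hp.out.pos (R.pow_u ▸ one_mem _)).trans (Nat.mul_le_mul_left _ hC)

lemma exists_normal_cuy (R : Relations d κ a x y u c)
    (hgen : Subgroup.closure {a, x, y, u} = ⊤) :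
    ∃ Y : Subgroup G, Y.Normal ∧ c ∈ Y ∧ u ∈ Y ∧ y ∈ Y ∧ Nat.card Y ≤ p ^ 3 := by
  obtain ⟨U, _, hc, hu, hU⟩ := R.exists_normal_cu hgen
  refine ⟨adjoin U y, ?_, le_adjoin hc, le_adjoin hu, self_mem_adjoin, ?_⟩
  · refine adjoin_normal <| mk_mem_center_of_closure hgen ?_
    rintro s (rfl | rfl | rfl | rfl)
    exacts [commute_mk_of_conj (mul_mem (pow_mem hu _) (pow_mem hc _)) R.conj_ay,
      commute_mk_of_conj (mul_mem (pow_mem hu _) (pow_mem hc _)) R.conj_xy, .refl _,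
      (R.commute_yu.map (QuotientGroup.mk' U)).symm]
  · rw [pow_succ']
    exact (card_adjoin_le hp.out.pos (R.pow_y ▸ one_mem _)).trans (Nat.mul_le_mul_left _ hU)

lemma card_le (R : Relations d κ a x y u c) (hgen : Subgroup.closure {a, x, y, u} = ⊤) :
    Nat.card G ≤ p ^ (d + 5) := by
  obtain ⟨Y, _, hc, hu, hy, hY⟩ := R.exists_normal_cuy hgen
  have hone : ∀ s ∈ Y, Commute (s : G ⧸ Y) x := fun s hs => by
    rw [(QuotientGroup.eq_one_iff s).2 hs]
    exact .one_left _
  have := adjoin_normal (N := Y) (g := x) <| mk_mem_center_of_closure hgen <| by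
    rintro s (rfl | rfl | rfl | rfl)
    exacts [commute_mk_of_conj (mul_mem (mul_mem (pow_mem hy _) (pow_mem hu _)) (pow_mem hc _))
      R.conj_ax, .refl _, hone _ hy, hone _ hu]
  set X := adjoin Y x
  have htop : adjoin X a = ⊤ := by
    rw [eq_top_iff, ← hgen, Subgroup.closure_le]
    rintro s (rfl | rfl | rfl | rfl)
    exacts [self_mem_adjoin, le_adjoin self_mem_adjoin, le_adjoin (le_adjoin hy),
      le_adjoin (le_adjoin hu)]
  rw [← Subgroup.card_top, ← htop]
  calc Nat.card (adjoin X a)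
      ≤ p ^ (d + 1) * Nat.card X :=
        card_adjoin_le (pow_pos hp.out.pos (d + 1)) (R.pow_eq ▸ le_adjoin hc)
    _ ≤ p ^ (d + 1) * (p * Nat.card Y) :=
        Nat.mul_le_mul_left _ (card_adjoin_le hp.out.pos (R.pow_x ▸ one_mem _))
    _ ≤ p ^ (d + 1) * (p * p ^ 3) := by gcongr
    _ = p ^ (d + 5) := by ring

/-- The pairs of corresponding generators generate the graph of an isomorphism: they satisfy the
relations, hence generate a group of order at most `p^(d+5)`, which maps onto both factors. -/
theorem nonempty_mulEquiv (R : Relations d κ a x y u c) (R' : Relations d κ a' x' y' u' c')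
    (hgen : Subgroup.closure {a, x, y, u} = ⊤) (hgen' : Subgroup.closure {a', x', y', u'} = ⊤)
    (hG : Nat.card G = p ^ (d + 5)) (hH : Nat.card H = p ^ (d + 5)) : Nonempty (G ≃* H) := by
  have hpos : p ^ (d + 5) ≠ 0 := pow_ne_zero _ hp.out.ne_zero
  have : Finite G := Nat.finite_of_card_ne_zero (hG ▸ hpos)
  have : Finite H := Nat.finite_of_card_ne_zero (hH ▸ hpos)
  set S : Set (G × H) := {(a, a'), (x, x'), (y, y'), (u, u')} with hS
  set K := Subgroup.closure S
  have hcK : (c, c') ∈ K := (R.prod R').pow_eq ▸ pow_mem (Subgroup.subset_closure (by simp [hS])) _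
  have hK : Nat.card K ≤ p ^ (d + 5) := by
    refine Relations.card_le (a := ⟨(a, a'), Subgroup.subset_closure (by simp [hS])⟩)
      (x := ⟨(x, x'), Subgroup.subset_closure (by simp [hS])⟩)
      (y := ⟨(y, y'), Subgroup.subset_closure (by simp [hS])⟩)
      (u := ⟨(u, u'), Subgroup.subset_closure (by simp [hS])⟩) (c := ⟨(c, c'), hcK⟩)
      ((R.prod R').of_map K.subtype_injective) ?_
    convert Subgroup.closure_closure_coe_preimage (k := S)
    ext s
    simp [hS, Subtype.ext_iff]
  have hfst : K.map (MonoidHom.fst G H) = ⊤ := by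
    rw [MonoidHom.map_closure, ← hgen]
    simp [hS, Set.image_insert_eq]
  have hsnd : K.map (MonoidHom.snd G H) = ⊤ := by
    rw [MonoidHom.map_closure, ← hgen']
    simp [hS, Set.image_insert_eq]
  exact ⟨(MulEquiv.ofBijective _ (bijective_of_map_eq_top hfst (hK.trans hG.ge))).symm.trans
    (MulEquiv.ofBijective _ (bijective_of_map_eq_top hsnd (hK.trans hH.ge)))⟩

end Card

end Relations

namespace LieConst

variable {p : ℕ} (θ : LieConst p)

lemma bracket_toMod_bracket (w v w' v' : Fin 4 → ZMod p) :
    θ.bracket (toMod (θ.bracket w v)) (toMod (θ.bracket w' v')) = 0 := by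
  ext i
  fin_cases i <;> simp

lemma ad_ad_ad_bracket (w₁ w₂ w₃ w₄ w₅ : Fin 4 → ZMod p) :
    θ.ad w₁ (θ.ad w₂ (θ.ad w₃ (θ.bracket w₄ w₅))) = 0 := by
  ext i
  fin_cases i <;> simp [ad_apply]

lemma ad_comm_bracket (w v w' v' : Fin 4 → ZMod p) :
    θ.ad w (θ.ad v (θ.bracket w' v')) = θ.ad v (θ.ad w (θ.bracket w' v')) := by
  ext i
  fin_cases i
  · simp only [ad_apply, Fin.zero_eta, bracket_zero, bracket_one, bracket_two, bracket_three,
      toMod_zero, toMod_one, toMod_two, toMod_three]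
    linear_combination
      (w 0 * v 1 - w 1 * v 0) * (w' 0 * v' 1 - w' 1 * v' 0) * θ.axy * θ.jacobi
  all_goals simp [ad_apply]

variable [Fact p.Prime]

/-- `exp (ad w) v - v`. -/
def expAd (w v : Fin 4 → ZMod p) : Fin 4 → ZMod p :=
  θ.bracket w v + (1 / 2 : ZMod p) • θ.ad w (θ.bracket w v)
    + (1 / 6 : ZMod p) • θ.ad w (θ.ad w (θ.bracket w v))

lemma bch_expAd [Fact (5 ≤ p)] (w v : Fin 4 → ZMod p) :
    θ.expAd w v + θ.bch (v + toMod (θ.expAd w v)) w = θ.bch w v := by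
  set s := v + toMod (θ.expAd w v) with hs
  have hbr : θ.bracket s w = -(θ.bracket w v + θ.ad w (θ.bracket w v)
      + (1 / 2 : ZMod p) • θ.ad w (θ.ad w (θ.bracket w v))) := by
    rw [bracket_swap, hs, map_add, ← ad_apply, expAd, map_add, map_add, map_smul, map_smul,
      ad_ad_ad_bracket, smul_zero, add_zero, add_assoc]
  have had : ∀ w' v', θ.ad s (θ.bracket w' v') = θ.ad v (θ.bracket w' v') := fun w' v' => by
    rw [ad_apply, hs, map_add, LinearMap.add_apply, ← ad_apply, add_eq_left, expAd, ad_apply,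
      ad_apply]
    simp only [map_add, map_smul, LinearMap.add_apply, LinearMap.smul_apply,
      bracket_toMod_bracket, smul_zero, add_zero]
  have had' : ∀ w' v' t, θ.ad s (θ.ad t (θ.bracket w' v')) = θ.ad v (θ.ad t (θ.bracket w' v')) :=
    fun _ _ _ => had _ _
  have h2 : (2 : ZMod p) ≠ 0 := two_ne_zero_zmod
  have h12 : (12 : ZMod p) ≠ 0 := twelve_ne_zero_zmod
  have h6 : (6 : ZMod p) ≠ 0 := fun h => h12 (by linear_combination 2 * h)
  have h24 : (24 : ZMod p) ≠ 0 := fun h => mul_ne_zero h2 h12 (by linear_combination h)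
  simp only [bch, expAd, hbr, map_neg, map_add, map_smul, had, had', ad_ad_ad_bracket,
    ad_comm_bracket θ w v, smul_zero, add_zero]
  ext i
  simp only [Pi.add_apply, Pi.sub_apply, Pi.neg_apply, Pi.smul_apply, smul_eq_mul]
  field_simp
  ring

/-- The exponents of the relations satisfied by the generators of the BCH group. -/
def groupExponents : LieConst p where
  xyu := θ.xyu
  xyc := θ.xyc + θ.xyu * θ.xuc / 2
  xuc := θ.xuc
  ayu := θ.ayu
  ayc := θ.ayc + θ.ayu * θ.auc / 2
  auc := θ.auc
  axy := θ.axy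
  axu := θ.axu + θ.axy * (θ.ayu + θ.xyu) / 2
  axc := θ.axc + (θ.axy * θ.ayc + θ.axu * θ.auc) / 2 + θ.axy * θ.ayu * θ.auc / 6
    + (θ.axy * θ.xyc + (θ.axu + θ.axy * (θ.ayu + θ.xyu) / 2) * θ.xuc) / 2
    - θ.axy * θ.xyu * θ.xuc / 12
  jacobi := θ.jacobi

lemma groupExponents_surjective (κ : LieConst p) : ∃ θ : LieConst p, θ.groupExponents = κ := by
  set xyc := κ.xyc - κ.xyu * κ.xuc / 2
  set ayc := κ.ayc - κ.ayu * κ.auc / 2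
  set axu := κ.axu - κ.axy * (κ.ayu + κ.xyu) / 2
  refine ⟨⟨κ.xyu, xyc, κ.xuc, κ.ayu, ayc, κ.auc, κ.axy, axu,
    κ.axc - (κ.axy * ayc + axu * κ.auc) / 2 - κ.axy * κ.ayu * κ.auc / 6
      - (κ.axy * xyc + (axu + κ.axy * (κ.ayu + κ.xyu) / 2) * κ.xuc) / 2
      + κ.axy * κ.xyu * κ.xuc / 12, κ.jacobi⟩, ?_⟩
  ext <;> simp only [groupExponents, xyc, ayc, axu] <;> ring

variable [Fact (5 ≤ p)]

-- The coefficients are those of `N / (exp N - 1)`.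
lemma bracket_eq_expAd (w v : Fin 4 → ZMod p) :
    θ.bracket w v = θ.expAd w v - (1 / 2 : ZMod p) • θ.ad w (θ.expAd w v)
      + (1 / 12 : ZMod p) • θ.ad w (θ.ad w (θ.expAd w v)) := by
  have h2 : (2 : ZMod p) ≠ 0 := two_ne_zero_zmod
  have h12 : (12 : ZMod p) ≠ 0 := twelve_ne_zero_zmod
  have h6 : (6 : ZMod p) ≠ 0 := fun h => h12 (by linear_combination 2 * h)
  simp only [expAd, map_add, map_smul, ad_ad_ad_bracket, smul_zero, add_zero]
  ext i
  simp only [Pi.add_apply, Pi.sub_apply, Pi.smul_apply, smul_eq_mul]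
  field_simp
  ring

/-- The conjugation relations among `exp A, exp X, exp Y, exp U` with exponents `κ`, expressed in
the Lie ring. -/
structure ExpRelations (θ κ : LieConst p) (A X Y U : Fin 4 → ZMod p) : Prop where
  bracket_yu : θ.bracket (toMod Y) (toMod U) = 0
  expAd_xu : θ.expAd (toMod X) (toMod U) = κ.xuc • Pi.single 0 (A 0)
  expAd_xy : θ.expAd (toMod X) (toMod Y) = κ.xyu • U + κ.xyc • Pi.single 0 (A 0)
  expAd_au : θ.expAd A (toMod U) = κ.auc • Pi.single 0 (A 0)
  expAd_ay : θ.expAd A (toMod Y) = κ.ayu • U + κ.ayc • Pi.single 0 (A 0)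
  expAd_ax : θ.expAd A (toMod X) = κ.axy • Y + κ.axu • U + κ.axc • Pi.single 0 (A 0)
    + θ.bch (toMod (κ.axy • Y + κ.axu • U + κ.axc • Pi.single 0 (A 0))) (toMod X)

lemma expRelations_single : θ.ExpRelations θ.groupExponents
    (Pi.single 0 1) (Pi.single 1 1) (Pi.single 2 1) (Pi.single 3 1) := by
  have h2 : (2 : ZMod p) ≠ 0 := two_ne_zero_zmod
  have h12 : (12 : ZMod p) ≠ 0 := twelve_ne_zero_zmod
  have h6 : (6 : ZMod p) ≠ 0 := fun h => h12 (by linear_combination 2 * h)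
  constructor <;> ext i <;> fin_cases i <;> simp [expAd, bch, ad_apply, groupExponents]
  all_goals try field_simp
  all_goals ring

variable {θ}

lemma ExpRelations.exists_lieMap {θ' : LieConst p} {A X Y U : Fin 4 → ZMod p}
    (h : θ.ExpRelations θ'.groupExponents A X Y U) :
    ∃ B : LieMap θ θ', B.A = A ∧ B.X = X ∧ B.Y = Y ∧ B.U = U := by
  have h2 : (2 : ZMod p) ≠ 0 := two_ne_zero_zmod
  have h12 : (12 : ZMod p) ≠ 0 := twelve_ne_zero_zmod
  have h6 : (6 : ZMod p) ≠ 0 := fun h => h12 (by linear_combination 2 * h)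
  have hXU : θ.bracket (toMod X) (toMod U) = θ'.xuc • Pi.single 0 (A 0) := by
    rw [bracket_eq_expAd, h.expAd_xu]
    simp [ad_apply, toMod_single, groupExponents]
  have hXY : θ.bracket (toMod X) (toMod Y) = θ'.xyu • U + θ'.xyc • Pi.single 0 (A 0) := by
    rw [bracket_eq_expAd, h.expAd_xy]
    simp only [ad_apply, map_add, map_smul, toMod_single, hXU, groupExponents, map_zero,
      smul_zero, add_zero]
    module
  have hAU : θ.bracket A (toMod U) = θ'.auc • Pi.single 0 (A 0) := by
    rw [bracket_eq_expAd, h.expAd_au]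
    simp [ad_apply, toMod_single, groupExponents]
  have hAY : θ.bracket A (toMod Y) = θ'.ayu • U + θ'.ayc • Pi.single 0 (A 0) := by
    rw [bracket_eq_expAd, h.expAd_ay]
    simp only [ad_apply, map_add, map_smul, toMod_single, hAU, groupExponents, map_zero,
      smul_zero, add_zero]
    module
  have hAX : θ.bracket A (toMod X) = θ'.axy • Y + θ'.axu • U + θ'.axc • Pi.single 0 (A 0) := by
    rw [bracket_eq_expAd, h.expAd_ax]
    simp only [bch, ad_apply, map_add, map_sub, map_smul, map_zero, toMod_single, hXU, hXY,
      hAU, hAY, h.bracket_yu, LinearMap.add_apply, LinearMap.smul_apply,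
      θ.bracket_swap (toMod Y) (toMod X), θ.bracket_swap (toMod U) (toMod X), bracket_self,
      groupExponents, smul_zero, add_zero, smul_neg, map_neg, neg_zero, sub_zero]
    ext i
    simp only [Pi.add_apply, Pi.sub_apply, Pi.neg_apply, Pi.smul_apply, Pi.zero_apply,
      smul_eq_mul]
    field_simp
    ring
  exact ⟨⟨A, X, Y, U, hXY, hXU, h.bracket_yu, hAX, hAY, hAU⟩, rfl, rfl, rfl, rfl⟩

end LieConst

namespace BCHGroup

variable {p d : ℕ} {θ κ : LieConst p}

/-- The exponential of an element of `Ω₁(L)`. -/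
def ofOmega (v : Fin 4 → ZMod p) : BCHGroup d θ := ⟨incl p d v⟩

lemma proj_log_ofOmega (v : Fin 4 → ZMod p) :
    proj p d (ofOmega v : BCHGroup d θ).log = toMod v := Carrier.proj_incl v

variable [Fact p.Prime]

lemma ofOmega_injective : Function.Injective (ofOmega : (Fin 4 → ZMod p) → BCHGroup d θ) :=
  fun _ _ h => Carrier.incl_injective (congrArg log h)

lemma ofOmega_zero : (ofOmega 0 : BCHGroup d θ) = 1 := BCHGroup.ext (map_zero _)

lemma ofOmega_mul {v w : Fin 4 → ZMod p} (h : θ.bracket (toMod v) (toMod w) = 0) :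
    (ofOmega v * ofOmega w : BCHGroup d θ) = ofOmega (v + w) := by
  ext1
  rw [log_mul_of_bracket_eq_zero (by rwa [proj_log_ofOmega, proj_log_ofOmega])]
  exact (map_add _ v w).symm

variable [Fact (5 ≤ p)]

lemma ofOmega_pow (v : Fin 4 → ZMod p) (n : ℕ) :
    (ofOmega v ^ n : BCHGroup d θ) = ofOmega ((n : ZMod p) • v) := by
  ext1
  rw [log_pow, Nat.cast_smul_eq_nsmul]
  exact (map_nsmul _ n v).symm

lemma exists_ofOmega {w : BCHGroup d θ} (h : w ^ p = 1) : ∃ v, ofOmega v = w := by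
  obtain ⟨v, hv⟩ := Carrier.exists_incl_of_nsmul_eq_zero (p := p) (d := d) (l := w.log)
    (by rw [← log_pow, h, log_one])
  exact ⟨v, BCHGroup.ext hv⟩

lemma pow_pow_succ (w : BCHGroup d θ) :
    w ^ p ^ (d + 1) = ofOmega (Pi.single 0 (proj p d w.log 0)) := by
  ext1
  rw [log_pow, Carrier.pow_succ_nsmul]
  refine congrArg (incl p d) ?_
  ext i
  fin_cases i <;> simp

lemma conj_eq (w v : BCHGroup d θ) : w * v * w⁻¹ =
    ⟨v.log + incl p d (θ.expAd (proj p d w.log) (proj p d v.log))⟩ := by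
  rw [mul_inv_eq_iff_eq_mul]
  ext1
  rw [log_mul, log_mul, map_add, Carrier.proj_incl, ← θ.bch_expAd, map_add]
  ring

lemma conj_eq_ofOmega_mul_iff {w v : BCHGroup d θ} {t : Fin 4 → ZMod p} :
    w * v * w⁻¹ = ofOmega t * v ↔ θ.expAd (proj p d w.log) (proj p d v.log) =
      t + θ.bch (toMod t) (proj p d v.log) := by
  have hlog : (ofOmega t * v).log = v.log + incl p d (t + θ.bch (toMod t) (proj p d v.log)) := by
    rw [log_mul, proj_log_ofOmega, map_add, ← add_assoc, add_comm v.log]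
    rfl
  rw [conj_eq, BCHGroup.ext_iff, hlog, add_right_inj, Carrier.incl_injective.eq_iff]

lemma conj_eq_ofOmega_mul_iff_of_bracket {w v : BCHGroup d θ} {t : Fin 4 → ZMod p}
    (h : θ.bracket (toMod t) (proj p d v.log) = 0) :
    w * v * w⁻¹ = ofOmega t * v ↔ θ.expAd (proj p d w.log) (proj p d v.log) = t := by
  rw [conj_eq_ofOmega_mul_iff, θ.bch_eq_zero h, add_zero]

lemma commute_iff {w v : BCHGroup d θ} :
    Commute w v ↔ θ.bracket (proj p d w.log) (proj p d v.log) = 0 := by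
  refine ⟨fun h => ?_, fun h => ?_⟩
  · have hconj : w * v * w⁻¹ = ofOmega 0 * v := by
      rw [h.eq, mul_inv_cancel_right, ofOmega_zero, one_mul]
    rw [conj_eq_ofOmega_mul_iff, map_zero, θ.bch_eq_zero (by simp), add_zero] at hconj
    rw [θ.bracket_eq_expAd, hconj]
    simp
  · ext1
    rw [log_mul_of_bracket_eq_zero h, log_mul_of_bracket_eq_zero, add_comm]
    rw [θ.bracket_swap, h, neg_zero]

section ConjRelations

variable {C X Y U : Fin 4 → ZMod p} (w : BCHGroup d θ) (r s t : ZMod p)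

lemma ofOmega_pow_val : (ofOmega X ^ r.val : BCHGroup d θ) = ofOmega (r • X) := by
  rw [ofOmega_pow, ZMod.natCast_zmod_val]

lemma conj_u_iff (hC : toMod C = 0) : w * ofOmega U * w⁻¹ = ofOmega C ^ s.val * ofOmega U ↔
    θ.expAd (proj p d w.log) (toMod U) = s • C := by
  rw [ofOmega_pow_val, conj_eq_ofOmega_mul_iff_of_bracket (by simp [hC]), proj_log_ofOmega]

lemma conj_y_iff (hC : toMod C = 0) (hYU : θ.bracket (toMod Y) (toMod U) = 0) :
    w * ofOmega Y * w⁻¹ = ofOmega U ^ r.val * ofOmega C ^ s.val * ofOmega Y ↔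
      θ.expAd (proj p d w.log) (toMod Y) = r • U + s • C := by
  rw [ofOmega_pow_val, ofOmega_pow_val, ofOmega_mul (by simp [hC]),
    conj_eq_ofOmega_mul_iff_of_bracket, proj_log_ofOmega]
  simp [hC, θ.bracket_swap (toMod U), hYU, proj_log_ofOmega]

lemma conj_x_iff (hC : toMod C = 0) (hYU : θ.bracket (toMod Y) (toMod U) = 0) :
    w * ofOmega X * w⁻¹ =
        ofOmega Y ^ r.val * ofOmega U ^ s.val * ofOmega C ^ t.val * ofOmega X ↔
      θ.expAd (proj p d w.log) (toMod X) =
        r • Y + s • U + t • C + θ.bch (toMod (r • Y + s • U + t • C)) (toMod X) := by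
  rw [ofOmega_pow_val, ofOmega_pow_val, ofOmega_pow_val, ofOmega_mul (by simp [hYU]),
    ofOmega_mul (by simp [hC]), conj_eq_ofOmega_mul_iff, proj_log_ofOmega]

end ConjRelations

lemma relations_iff {a : BCHGroup d θ} {X Y U : Fin 4 → ZMod p} :
    Relations d κ a (ofOmega X) (ofOmega Y) (ofOmega U) (a ^ p ^ (d + 1)) ↔
      θ.ExpRelations κ (proj p d a.log) X Y U := by
  have hpow : ∀ v : Fin 4 → ZMod p, (ofOmega v : BCHGroup d θ) ^ p = 1 := fun v => by
    rw [ofOmega_pow, ZMod.natCast_self, zero_smul, ofOmega_zero]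
  have hcomm : ∀ v w : Fin 4 → ZMod p, Commute (ofOmega v : BCHGroup d θ) (ofOmega w) ↔
      θ.bracket (toMod v) (toMod w) = 0 := fun v w => by
    rw [commute_iff, proj_log_ofOmega, proj_log_ofOmega]
  have hC := LieConst.toMod_single (proj p d a.log 0)
  have hcent : ∀ v : Fin 4 → ZMod p,
      Commute (ofOmega v : BCHGroup d θ) (ofOmega (Pi.single 0 (proj p d a.log 0))) :=
    fun v => (hcomm _ _).2 (by rw [hC, map_zero])
  rw [pow_pow_succ]
  constructor
  · intro R
    have hYU := (hcomm Y U).1 R.commute_yu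
    exact ⟨hYU, by simpa [proj_log_ofOmega] using (conj_u_iff _ _ hC).1 R.conj_xu,
      by simpa [proj_log_ofOmega] using (conj_y_iff _ _ _ hC hYU).1 R.conj_xy,
      (conj_u_iff _ _ hC).1 R.conj_au, (conj_y_iff _ _ _ hC hYU).1 R.conj_ay,
      (conj_x_iff _ _ _ _ hC hYU).1 R.conj_ax⟩
  · intro E
    have hYU := E.bracket_yu
    exact {
      pow_eq := pow_pow_succ a
      pow_c := hpow _
      pow_x := hpow _
      pow_y := hpow _
      pow_u := hpow _
      commute_xc := hcent _
      commute_yc := hcent _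
      commute_uc := hcent _
      commute_yu := (hcomm _ _).2 hYU
      conj_xu := (conj_u_iff _ _ hC).2 (by simpa [proj_log_ofOmega] using E.expAd_xu)
      conj_xy := (conj_y_iff _ _ _ hC hYU).2 (by simpa [proj_log_ofOmega] using E.expAd_xy)
      conj_au := (conj_u_iff _ _ hC).2 E.expAd_au
      conj_ay := (conj_y_iff _ _ _ hC hYU).2 E.expAd_ay
      conj_ax := (conj_x_iff _ _ _ _ hC hYU).2 E.expAd_ax }

end BCHGroup

namespace BCHGroup

variable {p d : ℕ} {θ θ' : LieConst p}

/-- The generator `exp a`. -/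
def genA : BCHGroup d θ := ⟨(1, 0, 0, 0)⟩

lemma proj_log_genA : proj p d (genA : BCHGroup d θ).log = Pi.single 0 1 := by
  ext i
  fin_cases i <;> simp [genA, proj]

variable [Fact p.Prime] [Fact (5 ≤ p)]

variable (d θ) in
lemma relations_gen : Relations d θ.groupExponents (genA : BCHGroup d θ) (ofOmega (Pi.single 1 1))
    (ofOmega (Pi.single 2 1)) (ofOmega (Pi.single 3 1)) (genA ^ p ^ (d + 1)) := by
  rw [relations_iff, proj_log_genA]
  exact θ.expRelations_single

lemma ofOmega_mem_of_gen_mem {H : Subgroup (BCHGroup d θ)} (ha : genA ∈ H)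
    (hx : ofOmega (Pi.single 1 1) ∈ H) (hy : ofOmega (Pi.single 2 1) ∈ H)
    (hu : ofOmega (Pi.single 3 1) ∈ H) (v : Fin 4 → ZMod p) : ofOmega v ∈ H := by
  have hc : (ofOmega (Pi.single 0 1) : BCHGroup d θ) ∈ H := by
    have h := pow_mem ha (p ^ (d + 1))
    rwa [pow_pow_succ, proj_log_genA, Pi.single_eq_same] at h
  have hsmul : ∀ (r : ZMod p) (i : Fin 4), (ofOmega (Pi.single i 1) : BCHGroup d θ) ∈ H →
      (ofOmega (r • Pi.single i 1) : BCHGroup d θ) ∈ H := fun r i hi => by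
    rw [← ofOmega_pow_val]
    exact pow_mem hi _
  have hyuc : ∀ v : Fin 4 → ZMod p, v 1 = 0 → (ofOmega v : BCHGroup d θ) ∈ H := fun v hv => by
    have hsum : v = v 0 • Pi.single 0 1 + v 2 • Pi.single 2 1 + v 3 • Pi.single 3 1 := by
      ext i
      fin_cases i <;> simp [hv]
    rw [hsum, ← ofOmega_mul, ← ofOmega_mul]
    · exact mul_mem (mul_mem (hsmul _ _ hc) (hsmul _ _ hy)) (hsmul _ _ hu)
    all_goals
      ext i
      fin_cases i <;> simp
  set x : BCHGroup d θ := ofOmega (v 1 • Pi.single 1 1) with hxv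
  have hrest : x⁻¹ * ofOmega v = ofOmega (-(v 1 • Pi.single 1 1) + v
      + θ.bch (toMod (-(v 1 • Pi.single 1 1))) (toMod v)) := by
    ext1
    rw [log_mul, log_inv, map_neg, hxv, proj_log_ofOmega, proj_log_ofOmega, map_neg]
    simp only [ofOmega, map_add, map_neg]
  rw [← mul_inv_cancel_left x (ofOmega v), hrest]
  refine mul_mem (hsmul _ _ hx) (hyuc _ ?_)
  simp [LieConst.bch, LieConst.ad_apply]

variable (d θ) in
lemma closure_gen : Subgroup.closure {(genA : BCHGroup d θ), ofOmega (Pi.single 1 1),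
    ofOmega (Pi.single 2 1), ofOmega (Pi.single 3 1)} = ⊤ := by
  set S : Set (BCHGroup d θ) := {genA, ofOmega (Pi.single 1 1),
    ofOmega (Pi.single 2 1), ofOmega (Pi.single 3 1)} with hS
  refine eq_top_iff.2 fun w _ => ?_
  have ha : genA ∈ Subgroup.closure S := Subgroup.subset_closure (by simp [hS])
  set g : BCHGroup d θ := genA ^ w.log.1.val with hg
  have hlog : (g⁻¹ * w).log.1 = socleHom p d (θ.bch (proj p d g⁻¹.log) (proj p d w.log) 0) := by
    rw [log_mul, log_inv, hg, log_pow]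
    simp [genA, incl]
  obtain ⟨v, hv⟩ : ∃ v, ofOmega v = g⁻¹ * w :=
    ⟨![θ.bch (proj p d g⁻¹.log) (proj p d w.log) 0, (g⁻¹ * w).log.2.1, (g⁻¹ * w).log.2.2.1,
      (g⁻¹ * w).log.2.2.2], BCHGroup.ext (Prod.ext hlog.symm rfl)⟩
  rw [← mul_inv_cancel_left g w, ← hv]
  refine mul_mem (pow_mem ha _) (ofOmega_mem_of_gen_mem ha ?_ ?_ ?_ v) <;>
    exact Subgroup.subset_closure (by simp [hS])

end BCHGroup

namespace LieMap

variable {p d : ℕ} {θ θ' : LieConst p} (B : LieMap θ θ') {a : Carrier p d}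
  [Fact p.Prime] [Fact (5 ≤ p)] (ha : proj p d a = B.A)

lemma toMonoidHom_ofOmega (v : Fin 4 → ZMod p) :
    B.toMonoidHom ha (.ofOmega v) = .ofOmega (B.onOmega v) :=
  BCHGroup.ext (B.onCarrier_incl ha v)

lemma toMonoidHom_genA : B.toMonoidHom ha .genA = ⟨a⟩ :=
  BCHGroup.ext (show B.onCarrier a (1, 0, 0, 0) = a by simpa using B.onCarrier_intCast a 1 0 0 0)

end LieMap

theorem BCHGroup.nonempty_mulEquiv_iff {p d : ℕ} {θ θ' : LieConst p} [Fact p.Prime]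
    [Fact (5 ≤ p)] : Nonempty (BCHGroup d θ' ≃* BCHGroup d θ) ↔
      ∃ B : LieMap θ θ', Function.Injective B.onOmega := by
  refine ⟨fun ⟨f⟩ => ?_, fun ⟨B, hB⟩ => B.nonempty_mulEquiv d hB⟩
  have R := (relations_gen d θ').map f.toMonoidHom
  obtain ⟨X, hX⟩ := exists_ofOmega R.pow_x
  obtain ⟨Y, hY⟩ := exists_ofOmega R.pow_y
  obtain ⟨U, hU⟩ := exists_ofOmega R.pow_u
  rw [map_pow, ← hX, ← hY, ← hU, relations_iff] at R
  obtain ⟨B, hA, rfl, rfl, rfl⟩ := R.exists_lieMap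
  have hf : B.toMonoidHom hA.symm = f.toMonoidHom := by
    refine MonoidHom.eq_of_eqOn_dense (closure_gen d θ') ?_
    rintro w (rfl | rfl | rfl | rfl)
    · exact B.toMonoidHom_genA _
    · rw [← hX, B.toMonoidHom_ofOmega]
      simp [LieMap.onOmega_apply]
    · rw [← hY, B.toMonoidHom_ofOmega]
      simp [LieMap.onOmega_apply]
    · rw [← hU, B.toMonoidHom_ofOmega]
      simp [LieMap.onOmega_apply]
  refine ⟨B, fun v w h => ofOmega_injective (f.injective ?_)⟩
  have hfv : ∀ v, f (ofOmega v) = ofOmega (B.onOmega v) := fun v => by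
    rw [← B.toMonoidHom_ofOmega hA.symm, hf]
    rfl
  rw [hfv, hfv, h]

theorem Relations.nonempty_mulEquiv_bchGroup {p d : ℕ} [Fact p.Prime] [Fact (5 ≤ p)]
    {κ : LieConst p} {G : Type*} [Group G] {a x y u c : G} (R : Relations d κ a x y u c)
    (hgen : Subgroup.closure {a, x, y, u} = ⊤) (hG : Nat.card G = p ^ (d + 5)) :
    ∃ θ : LieConst p, Nonempty (G ≃* BCHGroup d θ) := by
  obtain ⟨θ, rfl⟩ := κ.groupExponents_surjective
  exact ⟨θ, R.nonempty_mulEquiv (BCHGroup.relations_gen d θ) hgen (BCHGroup.closure_gen d θ) hG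
    BCHGroup.card_eq⟩

/-! ### Regular groups of type `(d + 2, 1, 1, 1)` -/

section Regular

/-- The only consequence of regularity that is used. It passes to subgroups, which makes induction
on the order possible. -/
def WeaklyRegular (p : ℕ) (G : Type*) [Group G] : Prop :=
  ∀ x y : G, (∀ h ∈ ⁅Subgroup.closure {x, y}, Subgroup.closure {x, y}⁆, h ^ p = 1) →
    x ^ p * y ^ p = (x * y) ^ p

lemma IsRegularPGroup.weaklyRegular {p : ℕ} {G : Type} [Group G] (hG : IsRegularPGroup p G) :
    WeaklyRegular p G := fun x y hxy => by
  obtain ⟨z, hz, h⟩ := hG x y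
  have hbot : MhoOne p ⁅Subgroup.closure {x, y}, Subgroup.closure {x, y}⁆ ≤ ⊥ :=
    (Subgroup.closure_le _).2 <| by
      rintro _ ⟨g, hg, rfl⟩
      exact hxy g hg
  rw [h, Subgroup.mem_bot.1 (hbot hz), mul_one]

lemma WeaklyRegular.subgroup {p : ℕ} {G : Type*} [Group G] (hG : WeaklyRegular p G)
    (H : Subgroup G) : WeaklyRegular p H := fun x y hxy => by
  refine Subtype.ext (hG x y fun g hg => ?_)
  have hcl : Subgroup.closure {(x : G), (y : G)} = (Subgroup.closure {x, y}).map H.subtype := by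
    rw [MonoidHom.map_closure, Set.image_pair, Subgroup.coe_subtype]
  rw [hcl, ← Subgroup.map_commutator] at hg
  obtain ⟨h, hh, rfl⟩ := hg
  rw [← map_pow, hxy h hh, map_one]

lemma mem_omegaSubgroup_one_iff {p : ℕ} {G : Type} [Group G]
    (hdiv : ∀ x y : G, x ^ p = y ^ p → (x⁻¹ * y) ^ p = 1) {x : G} :
    x ∈ OmegaSubgroup p G 1 ↔ x ^ p = 1 := by
  refine ⟨fun hx => ?_, fun hx => Subgroup.subset_closure (by simpa using hx)⟩
  have hinv : ∀ x : G, x ^ p = 1 → x⁻¹ ^ p = 1 := fun x hx => by rw [inv_pow, hx, inv_one]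
  refine Subgroup.closure_induction (p := fun x _ => x ^ p = 1) (fun x hx => by simpa using hx)
    (one_pow p) (fun x y _ _ hx hy => ?_) (fun x _ => hinv x) hx
  simpa using hdiv x⁻¹ y (by rw [hinv x hx, hy])

instance omegaSubgroup_characteristic {p : ℕ} {G : Type} [Group G] {i : ℕ} :
    (OmegaSubgroup p G i).Characteristic :=
  Subgroup.characteristic_iff_map_le.2 fun φ => by
    rw [OmegaSubgroup, MonoidHom.map_closure]
    refine Subgroup.closure_mono ?_
    rintro _ ⟨x, hx, rfl⟩
    exact (map_pow φ x _).symm.trans ((congrArg φ hx).trans (map_one φ))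

lemma commutator_le_of_closure {G : Type*} [Group G] {N : Subgroup G} [N.Normal] {S : Set G}
    (hS : Subgroup.closure S = ⊤) (h : ∀ s ∈ S, ∀ t ∈ S, Commute (s : G ⧸ N) t) :
    commutator G ≤ N := by
  have hcenter : ∀ g : G, (g : G ⧸ N) ∈ Subgroup.center (G ⧸ N) := fun g =>
    mk_mem_center_of_closure hS fun s hs => .symm <| Subgroup.mem_center_iff.1
      (mk_mem_center_of_closure hS fun t ht => h t ht s hs) _
  rw [← Subgroup.Normal.quotient_commutative_iff_commutator_le]
  refine ⟨⟨fun g k => ?_⟩⟩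
  obtain ⟨k, rfl⟩ := QuotientGroup.mk_surjective k
  exact Subgroup.mem_center_iff.1 (hcenter k) g

lemma exists_normal_ne_top_of_zpowers_ne_top {G : Type*} [Group G] [Finite G] [Group.IsNilpotent G]
    {y : G} (hy : Subgroup.zpowers y ≠ ⊤) : ∃ M : Subgroup G, M.Normal ∧ M ≠ ⊤ ∧ y ∈ M := by
  obtain ⟨M, hM, hyM⟩ := (eq_top_or_exists_le_coatom (Subgroup.zpowers y)).resolve_left hy
  exact ⟨M, Subgroup.NormalizerCondition.normal_of_coatom _
    Group.normalizerCondition_of_isNilpotent hM, hM.1, Subgroup.zpowers_le.1 hyM⟩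

open scoped commutatorElement in
lemma pow_eq_one_of_mem_commutator {p : ℕ} {G : Type} [Group G]
    (hdiv : ∀ g h : commutator G, g ^ p = h ^ p → (g⁻¹ * h) ^ p = 1) {x y : G}
    (hgen : Subgroup.closure {x, y} = ⊤) (hxy : ⁅y⁻¹, x⁆ ^ p = 1) {g : G}
    (hg : g ∈ commutator G) : g ^ p = 1 := by
  set S := (OmegaSubgroup p (commutator G) 1).map (commutator G).subtype
  have hxyS : ⁅y⁻¹, x⁆ ∈ S := ⟨⟨_, Subgroup.commutator_mem_commutator (Subgroup.mem_top _)
    (Subgroup.mem_top _)⟩, (mem_omegaSubgroup_one_iff hdiv).2 (Subtype.ext hxy), rfl⟩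
  have hcomm : Commute (x : G ⧸ S) y := by
    rw [← QuotientGroup.eq_one_iff, ← QuotientGroup.mk'_apply, map_commutatorElement,
      commutatorElement_eq_one_iff_commute] at hxyS
    exact (Commute.inv_left_iff.1 hxyS).symm
  obtain ⟨k, hk, rfl⟩ := commutator_le_of_closure (N := S) hgen (by
    rintro _ (rfl | rfl) _ (rfl | rfl)
    exacts [.refl _, hcomm, hcomm.symm, .refl _]) hg
  exact congrArg Subtype.val ((mem_omegaSubgroup_one_iff hdiv).1 hk)

open scoped commutatorElement in
lemma WeaklyRegular.inv_mul_pow_of_closure_eq_top {p : ℕ} {G : Type} [Group G] [Finite G]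
    [Group.IsNilpotent G] (hG : WeaklyRegular p G)
    (ih : ∀ M : Subgroup G, M ≠ ⊤ → ∀ x y : M, x ^ p = y ^ p → (x⁻¹ * y) ^ p = 1)
    {x y : G} (hgen : Subgroup.closure {x, y} = ⊤) (hxy : x ^ p = y ^ p) :
    (x⁻¹ * y) ^ p = 1 := by
  by_cases hy : Subgroup.zpowers y = ⊤
  · obtain ⟨k, rfl⟩ : x ∈ Subgroup.zpowers y := hy ▸ Subgroup.mem_top x
    rw [((Commute.refl y).zpow_left k).inv_left.mul_pow, ← hxy, inv_pow, inv_mul_cancel]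
  obtain ⟨M, hMn, hM, hyM⟩ := exists_normal_ne_top_of_zpowers_ne_top hy
  have hcomm : ⁅y⁻¹, x⁆ ^ p = 1 := by
    have hconj : (x * y * x⁻¹) ^ p = y ^ p := by
      rw [conj_pow, ← hxy]
      group
    have h := congrArg Subtype.val <|
      ih M hM ⟨y, hyM⟩ ⟨x * y * x⁻¹, hMn.conj_mem y hyM x⟩ (Subtype.ext hconj.symm)
    rwa [show ⁅y⁻¹, x⁆ = y⁻¹ * (x * y * x⁻¹) by rw [commutatorElement_def]; group]
  have : Nontrivial G := by
    contrapose! hy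
    exact Subsingleton.elim _ _
  have h := hG x (x⁻¹ * y) fun g hg => pow_eq_one_of_mem_commutator
    (ih _ (Group.IsSolvable.commutator_lt_top_of_nontrivial G).ne) hgen hcomm
    (Subgroup.commutator_mono le_top le_top hg)
  rw [mul_inv_cancel_left, ← hxy] at h
  exact mul_eq_left.1 h

theorem WeaklyRegular.inv_mul_pow_eq_one {p : ℕ} [Fact p.Prime] {G : Type} [Group G] [Finite G]
    (hp : IsPGroup p G) (hG : WeaklyRegular p G) {x y : G} (hxy : x ^ p = y ^ p) :
    (x⁻¹ * y) ^ p = 1 := by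
  induction hn : Nat.card G using Nat.strong_induction_on generalizing G with
  | _ n ih =>
    have hproper : ∀ M : Subgroup G, M ≠ ⊤ → ∀ x y : M, x ^ p = y ^ p → (x⁻¹ * y) ^ p = 1 :=
      fun M hM x y h => ih _
        (hn ▸ lt_of_not_ge fun hle => hM (Subgroup.eq_top_of_le_card _ hle))
        (hp.to_subgroup M) (hG.subgroup M) h rfl
    have := hp.isNilpotent
    by_cases hgen : Subgroup.closure {x, y} = ⊤
    · exact hG.inv_mul_pow_of_closure_eq_top hproper hgen hxy
    · exact congrArg Subtype.val <| hproper _ hgen ⟨x, Subgroup.subset_closure (by simp)⟩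
        ⟨y, Subgroup.subset_closure (by simp)⟩ (Subtype.ext hxy)

end Regular

section TypeInvariantsOfRegular

variable {p : ℕ} {G : Type} [Group G]

lemma card_omegaSubgroup_one (hdiv : ∀ x y : G, x ^ p = y ^ p → (x⁻¹ * y) ^ p = 1) :
    Nat.card (OmegaSubgroup p G 1) = Nat.card {g : G // g ^ p = 1} :=
  Nat.card_congr (Equiv.subtypeEquivRight fun _ => mem_omegaSubgroup_one_iff hdiv)

lemma omegaInv_eq_zero {f i : ℕ} (hf : ∀ g : G, g ^ p ^ f = 1) (hi : f < i) :
    omegaInv p G i = 0 := by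
  have htop : ∀ j, f ≤ j → OmegaSubgroup p G j = ⊤ := fun j hj =>
    eq_top_iff.2 fun g _ => Subgroup.subset_closure <| by
      rw [Set.mem_ofPred_eq, ← Nat.add_sub_cancel' hj, pow_add, pow_mul, hf, one_pow]
  rw [omegaInv, htop _ (by omega), htop _ hi.le, Subgroup.relIndex_self, Nat.factorization_one,
    Finsupp.zero_apply]

lemma muInv_one_le {f : ℕ} (hf : ∀ g : G, g ^ p ^ f = 1) : muInv p G 1 ≤ f := by
  rw [muInv, ← Nat.add_sub_cancel f 1, ← Nat.card_Icc, ← Nat.card_eq_finsetCard]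
  refine Nat.card_mono (Finset.finite_toSet _) fun i hi => Finset.mem_coe.2 <|
    Finset.mem_Icc.2 ⟨hi.1, ?_⟩
  by_contra hlt
  have := omegaInv_eq_zero hf (not_le.1 hlt)
  have := hi.2
  omega

variable [Finite G]

lemma card_torsion_succ_le (hdiv : ∀ x y : G, x ^ p = y ^ p → (x⁻¹ * y) ^ p = 1) (i : ℕ) :
    Nat.card {g : G // g ^ p ^ (i + 1) = 1} ≤
      Nat.card {g : G // g ^ p ^ i = 1} * Nat.card {g : G // g ^ p = 1} := by
  let root (g : G) : G := Set.rangeSplitting (fun g : G => g ^ p) ⟨g ^ p, g, rfl⟩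
  have hroot : ∀ g, root g ^ p = g ^ p := fun g => Set.apply_rangeSplitting (fun g : G => g ^ p) _
  rw [← Nat.card_prod]
  refine Nat.card_le_card_of_injective (fun g : {g : G // g ^ p ^ (i + 1) = 1} =>
    (⟨g.1 ^ p, by rw [← pow_mul, ← pow_succ', g.2]⟩, ⟨(root g)⁻¹ * g, hdiv _ _ (hroot g)⟩)) ?_
  rintro ⟨g, hg⟩ ⟨h, hh⟩ hgh
  simp only [Prod.mk.injEq, Subtype.mk.injEq, root] at hgh
  obtain ⟨hpow, hrest⟩ := hgh
  simp only [hpow] at hrest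
  exact Subtype.ext (mul_left_cancel hrest)

lemma card_torsion_le_pow (hdiv : ∀ x y : G, x ^ p = y ^ p → (x⁻¹ * y) ^ p = 1) (i : ℕ) :
    Nat.card {g : G // g ^ p ^ i = 1} ≤ Nat.card {g : G // g ^ p = 1} ^ i := by
  induction i with
  | zero => simp
  | succ i ih => exact (card_torsion_succ_le hdiv i).trans (Nat.mul_le_mul_right _ ih)

variable [hp : Fact p.Prime]

lemma exists_orderOf_eq_exponent_of_isPGroup (hG : IsPGroup p G) :
    ∃ f, (∃ a : G, orderOf a = p ^ f) ∧ ∀ g : G, g ^ p ^ f = 1 := by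
  obtain ⟨n, hn⟩ := IsPGroup.iff_card.1 hG
  obtain ⟨f, -, hf⟩ :=
    (Nat.dvd_prime_pow hp.out).1 (hn ▸ Group.exponent_dvd_nat_card (G := G))
  refine ⟨f, ?_, fun g => hf ▸ Monoid.pow_exponent_eq_one g⟩
  simpa [hf, hp.out.factorization_pow] using
    Nat.Prime.exists_orderOf_eq_pow_factorization_exponent G hp.out

lemma isCyclic_of_card_torsion_le (hG : IsPGroup p G)
    (hdiv : ∀ x y : G, x ^ p = y ^ p → (x⁻¹ * y) ^ p = 1)
    (hcard : Nat.card {g : G // g ^ p = 1} ≤ p) : IsCyclic G := by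
  obtain ⟨f, ⟨a, ha⟩, hf⟩ := exists_orderOf_eq_exponent_of_isPGroup hG
  refine isCyclic_of_orderOf_eq_card a (orderOf_le_card.antisymm ?_)
  calc Nat.card G = Nat.card {g : G // g ^ p ^ f = 1} :=
        (Nat.card_congr (Equiv.subtypeUnivEquiv hf)).symm
    _ ≤ Nat.card {g : G // g ^ p = 1} ^ f := card_torsion_le_pow hdiv f
    _ ≤ orderOf a := ha ▸ Nat.pow_le_pow_left hcard f

lemma pow_omegaInv_one (hG : IsPGroup p G) :
    p ^ omegaInv p G 1 = Nat.card (OmegaSubgroup p G 1) := by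
  obtain ⟨n, hn⟩ := IsPGroup.iff_card.1 (hG.to_subgroup (OmegaSubgroup p G 1))
  rw [omegaInv, Nat.sub_self, omegaSubgroup_zero, Subgroup.relIndex_bot_left, hn,
    hp.out.factorization_pow, Finsupp.single_eq_same]

lemma omegaInv_le_one (hG : IsPGroup p G)
    (hdiv : ∀ x y : G, x ^ p = y ^ p → (x⁻¹ * y) ^ p = 1) (hω : omegaInv p G 1 ≤ 1) {i : ℕ}
    (hi : 1 ≤ i) : omegaInv p G i ≤ 1 := by
  have hcard : Nat.card {g : G // g ^ p = 1} ≤ p := by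
    rw [← card_omegaSubgroup_one hdiv, ← pow_omegaInv_one hG]
    simpa using Nat.pow_le_pow_right hp.out.pos hω
  have := isCyclic_of_card_torsion_le hG hdiv hcard
  have hpow : ∀ x y : G, (x * y) ^ p = x ^ p * y ^ p := fun x y =>
    (show Commute x y from (IsCyclic.isMulCommutative (α := G)).is_comm.comm x y).mul_pow p
  obtain ⟨i, rfl⟩ := Nat.exists_eq_add_of_le' hi
  have hidx : (OmegaSubgroup p G i).relIndex (OmegaSubgroup p G (i + 1)) ≤ p := by
    refine Nat.le_of_mul_le_mul_left ?_ (Nat.card_pos (α := OmegaSubgroup p G i))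
    rw [card_omegaSubgroup_mul_relIndex, card_omegaSubgroup hpow, card_omegaSubgroup hpow]
    exact (card_torsion_succ_le hdiv i).trans (Nat.mul_le_mul_left _ hcard)
  refine (Nat.pow_le_pow_iff_right hp.out.one_lt).1 ?_
  calc p ^ omegaInv p G (i + 1)
      ≤ (OmegaSubgroup p G i).relIndex (OmegaSubgroup p G (i + 1)) :=
        Nat.ordProj_le p Subgroup.FiniteIndex.index_ne_zero
    _ ≤ p ^ 1 := by rwa [pow_one]

lemma HasTypeInvariants.omegaInv_one {e : ℕ} (hT : HasTypeInvariants p G [e, 1, 1, 1])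
    (hG : IsPGroup p G) (hdiv : ∀ x y : G, x ^ p = y ^ p → (x⁻¹ * y) ^ p = 1) :
    omegaInv p G 1 = 4 := by
  have h2 : muInv p G 2 = 1 := hT 1
  have h4 : muInv p G 4 = 1 := hT 3
  have h5 : muInv p G 5 = 0 := hT 4
  rw [muInv] at h2 h4 h5
  obtain ⟨⟨⟨i, hi, hωi⟩⟩, hfin⟩ := Nat.card_pos_iff.1 (h4 ▸ one_pos)
  have hone : 2 ≤ omegaInv p G 1 := by
    by_contra! hlt
    have := omegaInv_le_one hG hdiv (Nat.le_of_lt_succ hlt) hi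
    omega
  obtain rfl : i = 1 := congrArg Subtype.val <|
    (Nat.card_eq_one_iff_unique.1 h2).1.elim ⟨i, hi, by omega⟩ ⟨1, le_rfl, hone⟩
  refine le_antisymm (not_lt.1 fun hlt => ?_) hωi
  have : Finite {i // 1 ≤ i ∧ 5 ≤ omegaInv p G i} :=
    Set.Finite.subset (s := {i | 1 ≤ i ∧ 4 ≤ omegaInv p G i}) hfin fun i hi =>
      ⟨hi.1, by have := hi.2; omega⟩
  exact (Finite.card_pos_iff.2 ⟨⟨1, le_rfl, hlt⟩⟩).ne' h5

lemma HasTypeInvariants.exists_adjoin_eq_top {d : ℕ} (hT : HasTypeInvariants p G [d + 2, 1, 1, 1])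
    (hdiv : ∀ x y : G, x ^ p = y ^ p → (x⁻¹ * y) ^ p = 1) (hG : Nat.card G = p ^ (d + 5)) :
    ∃ a : G, orderOf a = p ^ (d + 2) ∧ adjoin (OmegaSubgroup p G 1) a = ⊤ := by
  have hpG := IsPGroup.of_card hG
  have hcard := pow_omegaInv_one hpG
  rw [hT.omegaInv_one hpG hdiv] at hcard
  obtain ⟨f, ⟨a, ha⟩, hf⟩ := exists_orderOf_eq_exponent_of_isPGroup hpG
  have hdf : d + 2 ≤ f := (hT 0).symm.trans_le (muInv_one_le hf)
  obtain ⟨k, rfl⟩ := Nat.exists_eq_add_of_le' hdf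
  have hmk : orderOf (a : G ⧸ OmegaSubgroup p G 1) = p ^ (k + d + 1) := by
    have hiff : ∀ i, (a : G ⧸ OmegaSubgroup p G 1) ^ p ^ i = 1 ↔ a ^ p ^ (i + 1) = 1 := fun i => by
      rw [← QuotientGroup.mk_pow, QuotientGroup.eq_one_iff, mem_omegaSubgroup_one_iff hdiv,
        ← pow_mul, ← pow_succ]
    refine orderOf_eq_prime_pow (mt (hiff _).1 ?_) ((hiff _).2 (hf a))
    refine fun h => (pow_lt_pow_right₀ hp.out.one_lt (Nat.lt_succ_self (k + d + 1))).not_ge ?_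
    exact ha ▸ orderOf_le_of_pow_eq_one (pow_pos hp.out.pos _) h
  have hadjoin : Nat.card (adjoin (OmegaSubgroup p G 1) a) = p ^ (k + (d + 5)) := by
    rw [card_adjoin, hmk, ← hcard, ← pow_add]
    congr 1
  have hle : k + (d + 5) ≤ d + 5 := (Nat.pow_le_pow_iff_right hp.out.one_lt).1 <|
    hadjoin ▸ hG ▸ Subgroup.card_le_card_group _
  obtain rfl : k = 0 := by omega
  rw [zero_add] at hadjoin ha
  exact ⟨a, ha, Subgroup.eq_top_of_card_eq _ (hadjoin.trans hG.symm)⟩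

end TypeInvariantsOfRegular

section GeneratorsOfRegular

open scoped commutatorElement

lemma exists_conj_eq {G : Type*} [Group G] {N : Subgroup G} [N.Normal] {g : G}
    (hg : (g : G ⧸ N) ∈ Subgroup.center (G ⧸ N)) (s : G) : ∃ w ∈ N, s * g * s⁻¹ = w * g := by
  refine ⟨s * g * s⁻¹ * g⁻¹, ?_, by rw [inv_mul_cancel_right]⟩
  rw [← QuotientGroup.eq_one_iff]
  simp only [QuotientGroup.mk_mul, QuotientGroup.mk_inv, Subgroup.mem_center_iff.1 hg s,
    mul_inv_cancel_right, mul_inv_cancel]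

lemma exists_eq_pow_mul_of_mem_adjoin {n : ℕ} [NeZero n] {G : Type*} [Group G] {N : Subgroup G}
    [N.Normal] {g v : G} (hg : g ^ n ∈ N) (hv : v ∈ adjoin N g) :
    ∃ k : ZMod n, ∃ w ∈ N, v = g ^ k.val * w := by
  obtain ⟨k, hk⟩ := hv
  refine ⟨k, (g ^ (k : ZMod n).val)⁻¹ * v, ?_, by rw [mul_inv_cancel_left]⟩
  have hn : (g : G ⧸ N) ^ n = 1 := by rwa [← QuotientGroup.mk_pow, QuotientGroup.eq_one_iff]
  rw [← QuotientGroup.eq_one_iff, QuotientGroup.mk_mul, QuotientGroup.mk_inv, inv_mul_eq_one,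
    QuotientGroup.mk_pow, ← zpow_natCast, ZMod.val_intCast, ← zpow_mod_orderOf,
    Int.emod_emod_of_dvd _ (Int.natCast_dvd_natCast.2 (orderOf_dvd_of_pow_eq_one hn)),
    zpow_mod_orderOf]
  exact hk

lemma adjoin_le {G : Type*} [Group G] {N H : Subgroup G} [N.Normal] {g : G} (hN : N ≤ H)
    (hg : g ∈ H) : adjoin N g ≤ H := fun v hv => by
  obtain ⟨k, hk⟩ := hv
  have hmem : (g ^ k)⁻¹ * v ∈ N := QuotientGroup.eq.1 hk
  simpa using mul_mem (zpow_mem hg k) (hN hmem)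

lemma card_adjoin_of_prime {p : ℕ} [Fact p.Prime] {G : Type*} [Group G] {N : Subgroup G}
    [N.Normal] {g : G} (hgp : g ^ p ∈ N) (hg : g ∉ N) :
    Nat.card (adjoin N g) = p * Nat.card N := by
  rw [card_adjoin, orderOf_eq_prime (p := p)]
  · rwa [← QuotientGroup.mk_pow, QuotientGroup.eq_one_iff]
  · rwa [Ne, QuotientGroup.eq_one_iff]

lemma commutator_le_of_adjoin_eq_top {G : Type*} [Group G] {N : Subgroup G} [N.Normal] {a : G}
    (ha : adjoin N a = ⊤) : commutator G ≤ N := by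
  have hcyc : IsCyclic (G ⧸ N) := isCyclic_iff_exists_zpowers_eq_top.2 ⟨a, by
    rw [← Subgroup.map_comap_eq_self_of_surjective (QuotientGroup.mk'_surjective N)
      (Subgroup.zpowers (a : G ⧸ N)), ← adjoin, ha,
      Subgroup.map_top_of_surjective _ (QuotientGroup.mk'_surjective N)]⟩
  exact Subgroup.Normal.quotient_commutative_iff_commutator_le.1 IsCyclic.isMulCommutative

lemma exists_mem_notMem_mk_mem_center {G : Type*} [Group G] [Group.IsNilpotent G]
    {K M : Subgroup G} [K.Normal] [hM : M.Normal] (h : ¬ M ≤ K) :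
    ∃ g ∈ M, g ∉ K ∧ (g : G ⧸ K) ∈ Subgroup.center (G ⧸ K) := by
  by_contra! hcon
  have hdeep : ∀ n, ∃ g ∈ M, g ∉ K ∧ g ∈ (⊤ : Subgroup G).lowerCentralSeries n := fun n => by
    induction n with
    | zero =>
      obtain ⟨g, hg, hgK⟩ := SetLike.not_le_iff_exists.1 h
      exact ⟨g, hg, hgK, Subgroup.mem_top g⟩
    | succ n ih =>
      obtain ⟨g, hg, hgK, hgn⟩ := ih
      obtain ⟨s, hs⟩ : ∃ s : G, ⁅g, s⁆ ∉ K := by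
        contrapose! hcon
        refine ⟨g, hg, hgK, Subgroup.mem_center_iff.2 fun s => ?_⟩
        obtain ⟨s, rfl⟩ := QuotientGroup.mk_surjective s
        have hs := hcon s
        rw [← QuotientGroup.eq_one_iff, ← QuotientGroup.mk'_apply, map_commutatorElement,
          commutatorElement_eq_one_iff_commute] at hs
        exact hs.symm
      refine ⟨⁅g, s⁆, ?_, hs, Subgroup.commutator_mem_commutator hgn (Subgroup.mem_top _)⟩
      rw [commutatorElement_def, mul_assoc, mul_assoc, ← mul_assoc s]
      exact mul_mem hg (hM.conj_mem _ (inv_mem hg) s)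
  obtain ⟨n, hn⟩ := Subgroup.nilpotent_iff_lowerCentralSeries.1 ‹Group.IsNilpotent G›
  obtain ⟨g, -, hgK, hg⟩ := hdeep n
  rw [hn, Subgroup.mem_bot] at hg
  exact hgK (hg ▸ one_mem K)

lemma pow_mem_center {p : ℕ} {G : Type*} [Group G]
    (hpow : ∀ x y : G, (x * y) ^ p = x ^ p * y ^ p) (hcomm : ∀ g ∈ commutator G, g ^ p = 1)
    (g : G) : g ^ p ∈ Subgroup.center G := Subgroup.mem_center_iff.2 fun h => by
  have hp := hpow ⁅h, g⁆ g
  rw [hcomm _ (Subgroup.commutator_mem_commutator (Subgroup.mem_top h) (Subgroup.mem_top g)),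
    commutatorElement_def, inv_mul_cancel_right, one_mul, conj_pow] at hp
  exact mul_inv_eq_iff_eq_mul.1 hp

lemma exists_adjoin_normal {p : ℕ} [Fact p.Prime] {G : Type*} [Group G] [Group.IsNilpotent G]
    {N M : Subgroup G} [N.Normal] [M.Normal] (hM : ∀ g ∈ M, g ^ p = 1) (h : ¬ M ≤ N) :
    ∃ g ∈ M, (adjoin N g).Normal ∧ Nat.card (adjoin N g) = p * Nat.card N ∧
      ∀ s : G, ∃ w ∈ N, s * g * s⁻¹ = w * g := by
  obtain ⟨g, hgM, hgN, hg⟩ := exists_mem_notMem_mk_mem_center h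
  exact ⟨g, hgM, adjoin_normal hg, card_adjoin_of_prime (hM g hgM ▸ one_mem N) hgN,
    exists_conj_eq hg⟩

lemma index_centralizer_le {G : Type*} [Group G] [Finite G] {N : Subgroup G} {u : G}
    (hu : ∀ s : G, ∃ w ∈ N, s * u * s⁻¹ = w * u) :
    (Subgroup.centralizer {u}).index ≤ Nat.card N := by
  choose w hw hconj using hu
  refine Nat.card_le_card_of_injective
    (fun q : G ⧸ Subgroup.centralizer {u} => (⟨w q.out, hw _⟩ : N)) fun q r hqr => ?_
  have hw' : w q.out = w r.out := congrArg Subtype.val hqr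
  have h : r.out * u * r.out⁻¹ = q.out * u * q.out⁻¹ := by rw [hconj, hconj, hw']
  rw [← QuotientGroup.out_eq' q, ← QuotientGroup.out_eq' r, QuotientGroup.eq,
    Subgroup.mem_centralizer_singleton_iff]
  calc q.out⁻¹ * r.out * u = q.out⁻¹ * (r.out * u * r.out⁻¹) * r.out := by group
    _ = u * (q.out⁻¹ * r.out) := by rw [h]; group

lemma card_le_index_mul_card_inf {G : Type*} [Group G] [Finite G] (C M : Subgroup G) [C.Normal] :
    Nat.card M ≤ C.index * Nat.card (M ⊓ C : Subgroup G) := by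
  rw [← Subgroup.relIndex_bot_left M, ← Subgroup.relIndex_mul_relIndex ⊥ (M ⊓ C) M bot_le
    inf_le_left, Subgroup.inf_relIndex_left, Subgroup.relIndex_bot_left, mul_comm]
  exact Nat.mul_le_mul_right _
    (Nat.le_of_dvd Nat.card_pos (Subgroup.relIndex_dvd_index_of_normal C M))

lemma not_inf_centralizer_le_adjoin {p : ℕ} [Fact p.Prime] {G : Type*} [Group G] [Finite G]
    {N M : Subgroup G} [N.Normal] {u : G} [(adjoin N u).Normal] (hN : N ≤ Subgroup.center G)
    (hNcard : Nat.card N = p) (hucard : Nat.card (adjoin N u) = p ^ 2)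
    (hMcard : Nat.card M = p ^ 4) (hu : ∀ s : G, ∃ w ∈ N, s * u * s⁻¹ = w * u) :
    ¬ M ⊓ Subgroup.centralizer (adjoin N u : Set G) ≤ adjoin N u := fun hle => by
  have hcent : Subgroup.centralizer {u} ≤ Subgroup.centralizer (adjoin N u : Set G) := by
    rw [Subgroup.le_centralizer_iff]
    refine adjoin_le (hN.trans (Subgroup.center_le_centralizer _)) ?_
    exact Subgroup.mem_centralizer_iff.2 fun s hs => Subgroup.mem_centralizer_singleton_iff.1 hs
  have hindex : (Subgroup.centralizer (adjoin N u : Set G)).index ≤ p :=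
    (Subgroup.index_antitone hcent).trans (hNcard ▸ index_centralizer_le hu)
  have hcard := (card_le_index_mul_card_inf _ M).trans
    (Nat.mul_le_mul hindex (Subgroup.card_le_of_le hle))
  rw [hMcard, hucard, ← pow_succ'] at hcard
  exact absurd hcard (not_le.2 (Nat.pow_lt_pow_right (Fact.out : p.Prime).one_lt (by norm_num)))

/-- The normal series `⟨c⟩ ≤ ⟨c, u⟩ ≤ ⟨c, u, y⟩ ≤ ⟨c, u, y, x⟩` with central factors, and `y`
centralising `u`: the exponents of the conjugates of `u`, `y` and `x` under an arbitrary element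
are recorded as residues modulo `p`. -/
structure CentralSeries (p : ℕ) {G : Type*} [Group G] (x y u c : G) : Prop where
  pow_c : c ^ p = 1
  pow_x : x ^ p = 1
  pow_y : y ^ p = 1
  pow_u : u ^ p = 1
  mem_center : c ∈ Subgroup.center G
  commute_yu : Commute y u
  exists_conj_u : ∀ s : G, ∃ k : ZMod p, s * u * s⁻¹ = c ^ k.val * u
  exists_conj_y : ∀ s : G, ∃ j k : ZMod p, s * y * s⁻¹ = u ^ j.val * c ^ k.val * y
  exists_conj_x : ∀ s : G, ∃ i j k : ZMod p,
    s * x * s⁻¹ = y ^ i.val * u ^ j.val * c ^ k.val * x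

lemma exists_eq_pow_of_mem_adjoin_bot {n : ℕ} [NeZero n] {G : Type*} [Group G] {c v : G}
    (hc : c ^ n = 1) (hv : v ∈ adjoin ⊥ c) : ∃ k : ZMod n, v = c ^ k.val := by
  obtain ⟨k, w, hw, rfl⟩ := exists_eq_pow_mul_of_mem_adjoin (Subgroup.mem_bot.2 hc) hv
  exact ⟨k, by rw [Subgroup.mem_bot.1 hw, mul_one]⟩

lemma exists_eq_pow_mul_pow_of_mem_adjoin {n : ℕ} [NeZero n] {G : Type*} [Group G] {c u v : G}
    [(adjoin ⊥ c).Normal] (hc : c ^ n = 1) (hu : u ^ n = 1) (hv : v ∈ adjoin (adjoin ⊥ c) u) :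
    ∃ j k : ZMod n, v = u ^ j.val * c ^ k.val := by
  obtain ⟨j, w, hw, rfl⟩ := exists_eq_pow_mul_of_mem_adjoin (hu ▸ one_mem _) hv
  obtain ⟨k, rfl⟩ := exists_eq_pow_of_mem_adjoin_bot hc hw
  exact ⟨j, k, rfl⟩

lemma exists_centralSeries {p : ℕ} [Fact p.Prime] {G : Type*} [Group G] [Finite G]
    [Group.IsNilpotent G] {M : Subgroup G} [M.Normal] (hM : ∀ g ∈ M, g ^ p = 1)
    (hMcard : Nat.card M = p ^ 4) {c : G} (hc : c ∈ Subgroup.center G) (hc1 : c ≠ 1)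
    (hcM : c ∈ M) :
    ∃ x y u : G, CentralSeries p x y u c ∧ M ≤ Subgroup.closure {c, x, y, u} := by
  have hnot : ∀ {H : Subgroup G} {k : ℕ}, k < 4 → Nat.card H = p ^ k → ¬ M ≤ H :=
    fun hk hcard hle => (Nat.pow_lt_pow_right (Fact.out : p.Prime).one_lt hk).not_ge
      (hMcard ▸ hcard ▸ Subgroup.card_le_of_le hle)
  have hNcenter : adjoin ⊥ c ≤ Subgroup.center G := adjoin_le bot_le hc
  have hNnormal : (adjoin ⊥ c).Normal := ⟨fun v hv g => by
    rwa [Subgroup.mem_center_iff.1 (hNcenter hv) g, mul_inv_cancel_right]⟩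
  have hNcard : Nat.card (adjoin ⊥ c) = p := by
    rw [card_adjoin_of_prime (hM c hcM ▸ one_mem ⊥) (mt Subgroup.mem_bot.1 hc1),
      Subgroup.card_bot, mul_one]
  obtain ⟨u, huM, hunormal, hucard, hu⟩ :=
    exists_adjoin_normal hM (hnot (k := 1) (by norm_num) (by rw [hNcard, pow_one]))
  rw [hNcard, ← sq] at hucard
  obtain ⟨y, ⟨hyM, hycent⟩, hynormal, hycard, hy⟩ := exists_adjoin_normal
    (M := M ⊓ Subgroup.centralizer _) (fun g hg => hM g hg.1)
    (not_inf_centralizer_le_adjoin hNcenter hNcard hucard hMcard hu)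
  rw [hucard, ← pow_succ'] at hycard
  obtain ⟨x, hxM, -, hxcard, hx⟩ := exists_adjoin_normal hM (hnot (by norm_num) hycard)
  rw [hycard, ← pow_succ'] at hxcard
  have hcp := hM c hcM
  have hup := hM u huM
  have hyp : y ^ p ∈ adjoin (adjoin ⊥ c) u := hM y hyM ▸ one_mem _
  refine ⟨x, y, u, ⟨hcp, hM x hxM, hM y hyM, hup, hc,
    (Subgroup.mem_centralizer_iff.1 hycent u self_mem_adjoin).symm, fun s => ?_, fun s => ?_,
    fun s => ?_⟩, ?_⟩
  · obtain ⟨w, hw, h⟩ := hu s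
    obtain ⟨k, rfl⟩ := exists_eq_pow_of_mem_adjoin_bot hcp hw
    exact ⟨k, h⟩
  · obtain ⟨w, hw, h⟩ := hy s
    obtain ⟨j, k, rfl⟩ := exists_eq_pow_mul_pow_of_mem_adjoin hcp hup hw
    exact ⟨j, k, h⟩
  · obtain ⟨w, hw, h⟩ := hx s
    obtain ⟨i, v, hv, rfl⟩ := exists_eq_pow_mul_of_mem_adjoin hyp hw
    obtain ⟨j, k, rfl⟩ := exists_eq_pow_mul_pow_of_mem_adjoin hcp hup hv
    exact ⟨i, j, k, by rw [h, ← mul_assoc]⟩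
  · have hle : adjoin (adjoin (adjoin (adjoin ⊥ c) u) y) x ≤ M :=
      adjoin_le (adjoin_le (adjoin_le (adjoin_le bot_le hcM) huM) hyM) hxM
    rw [← Subgroup.eq_of_le_of_card_ge hle (hMcard.trans hxcard.symm).le]
    refine adjoin_le (adjoin_le (adjoin_le (adjoin_le bot_le ?_) ?_) ?_) ?_ <;>
      exact Subgroup.subset_closure (by simp)

lemma conj_pow_mul_pow_mul {G : Type*} [Group G] {g y u c : G} {i k m : ℕ}
    (hc : c ∈ Subgroup.center G) (hgu : g * u * g⁻¹ = c ^ k * u)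
    (hgy : g * y * g⁻¹ = u ^ i * c ^ m * y) (j n : ℕ) :
    g * (u ^ j * c ^ n * y) * g⁻¹ = c ^ (j * k) * (u ^ (i + j) * c ^ (m + n) * y) := by
  have hcomm : ∀ (r : ℕ) (v : G), Commute (c ^ r) v := fun r v =>
    (Subgroup.mem_center_iff.1 (pow_mem hc r) v).symm
  calc g * (u ^ j * c ^ n * y) * g⁻¹
    _ = (g * u * g⁻¹) ^ j * (g * c ^ n * g⁻¹) * (g * y * g⁻¹) := by rw [conj_pow]; group
    _ = c ^ (j * k) * (u ^ j * (c ^ n * u ^ i) * c ^ m * y) := by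
        rw [hgu, hgy, (hcomm k u).mul_pow, ← (hcomm n g).eq, mul_inv_cancel_right, ← pow_mul,
          mul_comm k]
        simp only [mul_assoc]
    _ = _ := by
        rw [(hcomm n _).eq, add_comm i, add_comm m, pow_add, pow_add]
        simp only [mul_assoc]

-- The Jacobi identity: both orders of conjugating `y` by `a` and `x` agree, as `w` commutes with
-- all conjugates involved.
lemma pow_mul_eq_pow_mul_of_conj {G : Type*} [Group G] {a x y u c w : G} {i j k l m n : ℕ}
    (hc : c ∈ Subgroup.center G) (hwy : Commute w y) (hwu : Commute w u)
    (hax : a * x * a⁻¹ = w * x) (hau : a * u * a⁻¹ = c ^ k * u)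
    (hay : a * y * a⁻¹ = u ^ i * c ^ m * y) (hxu : x * u * x⁻¹ = c ^ l * u)
    (hxy : x * y * x⁻¹ = u ^ j * c ^ n * y) : c ^ (j * k) = c ^ (i * l) := by
  have hwc : Commute w c := Subgroup.mem_center_iff.1 hc w
  have h : a * (x * y * x⁻¹) * a⁻¹ = w * (x * (a * y * a⁻¹) * x⁻¹) * w⁻¹ := by
    rw [mul_inv_eq_iff_eq_mul] at hax
    calc a * (x * y * x⁻¹) * a⁻¹ = (a * x) * y * (a * x)⁻¹ := by group
      _ = w * (x * (a * y * a⁻¹) * x⁻¹) * w⁻¹ := by rw [hax]; group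
  rw [hxy, hay, conj_pow_mul_pow_mul hc hau hay, conj_pow_mul_pow_mul hc hxu hxy,
    (((hwc.pow_right _).mul_right (((hwu.pow_right _).mul_right (hwc.pow_right _)).mul_right
      hwy))).eq, mul_inv_cancel_right, add_comm i, add_comm m] at h
  exact mul_right_cancel h

lemma CentralSeries.exists_relations {p d : ℕ} [Fact p.Prime] {G : Type*} [Group G]
    {a x y u c : G} (hS : CentralSeries p x y u c) (ha : a ^ p ^ (d + 1) = c) (hc : c ≠ 1) :
    ∃ κ : LieConst p, Relations d κ a x y u c := by
  have hcentral : ∀ g : G, Commute g c := fun g => Subgroup.mem_center_iff.1 hS.mem_center g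
  obtain ⟨xuc, hxu⟩ := hS.exists_conj_u x
  obtain ⟨auc, hau⟩ := hS.exists_conj_u a
  obtain ⟨xyu, xyc, hxy⟩ := hS.exists_conj_y x
  obtain ⟨ayu, ayc, hay⟩ := hS.exists_conj_y a
  obtain ⟨axy, axu, axc, hax⟩ := hS.exists_conj_x a
  have hw : ∀ v, Commute y v → Commute u v →
      Commute (y ^ axy.val * u ^ axu.val * c ^ axc.val) v := fun v hy hu =>
    ((hy.pow_left _).mul_left (hu.pow_left _)).mul_left ((hcentral v).symm.pow_left _)
  have hjacobi := pow_mul_eq_pow_mul_of_conj hS.mem_center (hw y (Commute.refl y)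
    hS.commute_yu.symm) (hw u hS.commute_yu (Commute.refl u)) hax hau hay hxu hxy
  rw [pow_inj_mod, orderOf_eq_prime hS.pow_c hc] at hjacobi
  refine ⟨⟨xyu, xyc, xuc, ayu, ayc, auc, axy, axu, axc, ?_⟩, ⟨ha, hS.pow_c, hS.pow_x, hS.pow_y,
    hS.pow_u, hcentral x, hcentral y, hcentral u, hS.commute_yu, hxu, hxy, hau, hay, hax⟩⟩
  simpa using (ZMod.natCast_eq_natCast_iff' _ _ p).2 hjacobi

theorem IsRegularPGroup.exists_mulEquiv_bchGroup {p d : ℕ} [Fact p.Prime] [Fact (5 ≤ p)]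
    {G : Type} [Group G] (hreg : IsRegularPGroup p G)
    (hT : HasTypeInvariants p G [d + 2, 1, 1, 1]) (hG : Nat.card G = p ^ (d + 5)) :
    ∃ θ : LieConst p, Nonempty (G ≃* BCHGroup d θ) := by
  have hp := (Fact.out : p.Prime)
  have hfin : Finite G := Nat.finite_of_card_ne_zero (hG ▸ pow_ne_zero _ hp.ne_zero)
  have hpG := IsPGroup.of_card hG
  have hnil : Group.IsNilpotent G := hpG.isNilpotent
  have hdiv := fun x y : G => hreg.weaklyRegular.inv_mul_pow_eq_one hpG (x := x) (y := y)
  have hΩ := fun {x : G} => mem_omegaSubgroup_one_iff hdiv (x := x)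
  have hΩcard := pow_omegaInv_one hpG
  rw [hT.omegaInv_one hpG hdiv] at hΩcard
  obtain ⟨a, ha, hgen⟩ := hT.exists_adjoin_eq_top hdiv hG
  have hcomm : ∀ g ∈ commutator G, g ^ p = 1 := fun g hg =>
    hΩ.1 (commutator_le_of_adjoin_eq_top hgen hg)
  have hpow : ∀ x y : G, (x * y) ^ p = x ^ p * y ^ p := fun x y =>
    (hreg.weaklyRegular x y fun g hg =>
      hcomm g (Subgroup.commutator_mono le_top le_top hg)).symm
  have hc : a ^ p ^ (d + 1) ≠ 1 := pow_ne_one_of_lt_orderOf (pow_ne_zero _ hp.ne_zero)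
    (ha ▸ Nat.pow_lt_pow_right hp.one_lt (Nat.lt_succ_self _))
  obtain ⟨x, y, u, hS, hle⟩ := exists_centralSeries (M := OmegaSubgroup p G 1)
    (fun g hg => hΩ.1 hg) hΩcard.symm
    (by rw [pow_succ, pow_mul]; exact pow_mem_center hpow hcomm _) hc
    (hΩ.2 (by rw [← pow_mul, ← pow_succ, ← ha, pow_orderOf_eq_one]))
  obtain ⟨κ, R⟩ := hS.exists_relations rfl hc
  refine R.nonempty_mulEquiv_bchGroup (top_le_iff.1 (hgen ▸ adjoin_le (hle.trans ?_)
    (Subgroup.subset_closure (by simp)))) hG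
  rw [Subgroup.closure_le, Set.insert_subset_iff]
  exact ⟨pow_mem (Subgroup.subset_closure (by simp)) _,
    (Set.subset_insert _ _).trans Subgroup.subset_closure⟩

end GeneratorsOfRegular

/-! ### Classification of the structure constants -/

namespace LieMap

variable {p : ℕ} {θ θ' : LieConst p} (B : LieMap θ θ')

/-- The determinant of the map induced on `Ω₁(L)/⟨c⟩`. -/
def detModC : ZMod p :=
  B.X 1 * (B.Y 2 * B.U 3 - B.Y 3 * B.U 2) - B.X 2 * (B.Y 1 * B.U 3 - B.Y 3 * B.U 1)
    + B.X 3 * (B.Y 1 * B.U 2 - B.Y 2 * B.U 1)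

lemma injective_onOmega_iff [Fact p.Prime] :
    Function.Injective B.onOmega ↔ B.A 0 ≠ 0 ∧ B.detModC ≠ 0 := by
  have hdet : LinearMap.det B.onOmega = B.A 0 * B.detModC := by
    rw [← LinearMap.det_toMatrix', Matrix.det_succ_column_zero]
    simp [LinearMap.toMatrix'_apply, onOmega_apply, Fin.sum_univ_succ, Matrix.det_fin_three,
      detModC, -mul_eq_mul_left_iff]
    ring
  rw [← mul_ne_zero_iff, ← hdet, ← isUnit_iff_ne_zero, ← LinearMap.isUnit_iff_isUnit_det,
    LinearMap.isUnit_iff_ker_eq_bot, LinearMap.ker_eq_bot]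

end LieMap

namespace LieConst

variable {p : ℕ}

/-- `θ` and `θ'` are structure constants of the same Lie ring, for two choices of the basis. -/
def Isomorphic (θ θ' : LieConst p) : Prop := ∃ B : LieMap θ θ', Function.Injective B.onOmega

section Equivalence

variable [Fact p.Prime] [Fact (5 ≤ p)] {θ θ' θ'' : LieConst p}

lemma isomorphic_iff_nonempty_mulEquiv (d : ℕ) :
    Isomorphic θ θ' ↔ Nonempty (BCHGroup d θ ≃* BCHGroup d θ') :=
  BCHGroup.nonempty_mulEquiv_iff.symm.trans ⟨fun ⟨f⟩ => ⟨f.symm⟩, fun ⟨f⟩ => ⟨f.symm⟩⟩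

@[refl] lemma Isomorphic.refl (θ : LieConst p) : Isomorphic θ θ :=
  (isomorphic_iff_nonempty_mulEquiv 0).2 ⟨.refl _⟩

@[symm] lemma Isomorphic.symm (h : Isomorphic θ θ') : Isomorphic θ' θ :=
  (isomorphic_iff_nonempty_mulEquiv 0).2
    (((isomorphic_iff_nonempty_mulEquiv 0).1 h).map MulEquiv.symm)

@[trans] lemma Isomorphic.trans (h : Isomorphic θ θ') (h' : Isomorphic θ' θ'') :
    Isomorphic θ θ'' :=
  (isomorphic_iff_nonempty_mulEquiv 0).2
    (((isomorphic_iff_nonempty_mulEquiv 0).1 h).map2 MulEquiv.trans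
      ((isomorphic_iff_nonempty_mulEquiv 0).1 h'))

end Equivalence

section Moves

/-- The structure constants after replacing `a` by `a + s x + r y + q u`. -/
@[simps] def addA (θ : LieConst p) (s r q : ZMod p) : LieConst p where
  xyu := θ.xyu
  xyc := θ.xyc
  xuc := θ.xuc
  ayu := θ.ayu + s * θ.xyu
  ayc := θ.ayc + s * θ.xyc
  auc := θ.auc + s * θ.xuc
  axy := θ.axy
  axu := θ.axu - r * θ.xyu
  axc := θ.axc - r * θ.xyc - q * θ.xuc
  jacobi := by linear_combination θ.jacobi

/-- The structure constants after replacing `x` by `x + r y + q u`. -/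
@[simps] def addX (θ : LieConst p) (r q : ZMod p) : LieConst p where
  __ := θ
  axu := θ.axu + r * θ.ayu
  axc := θ.axc + r * θ.ayc + q * θ.auc

/-- The structure constants after replacing `y` by `y + r u + q c`. -/
@[simps] def addY (θ : LieConst p) (r q : ZMod p) : LieConst p where
  __ := θ
  xyc := θ.xyc + r * θ.xuc
  ayc := θ.ayc + r * θ.auc
  axu := θ.axu - r * θ.axy
  axc := θ.axc - q * θ.axy

/-- The structure constants after replacing `u` by `u + r c`. -/
@[simps] def addU (θ : LieConst p) (r : ZMod p) : LieConst p where
  __ := θ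
  xyc := θ.xyc - r * θ.xyu
  ayc := θ.ayc - r * θ.ayu
  axc := θ.axc - r * θ.axu

/-- The structure constants after exchanging `x` and `y`, when `[x, u] = 0` and `[a, x]` has no
`y`-component. -/
@[simps] def swapXY (θ : LieConst p) (hxuc : θ.xuc = 0) : LieConst p where
  xyu := -θ.xyu
  xyc := -θ.xyc
  xuc := 0
  ayu := θ.axu
  ayc := θ.axc
  auc := θ.auc
  axy := 0
  axu := θ.ayu
  axc := θ.ayc
  jacobi := by linear_combination -θ.jacobi - θ.ayu * hxuc

/-- The structure constants after exchanging `y` and `u`, when `[x, y]` and `[a, y]` have no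
`u`-component. -/
@[simps] def swapYU (θ : LieConst p) : LieConst p where
  xyu := 0
  xyc := θ.xuc
  xuc := θ.xyc
  ayu := 0
  ayc := θ.auc
  auc := θ.ayc
  axy := θ.axu
  axu := θ.axy
  axc := θ.axc
  jacobi := by ring

variable [Fact p.Prime] (θ : LieConst p)

lemma isomorphic_addA (s r q : ZMod p) : Isomorphic θ (θ.addA s r q) := by
  refine ⟨⟨![1, s, r, q], Pi.single 1 1, Pi.single 2 1, Pi.single 3 1, ?_, ?_, ?_, ?_, ?_, ?_⟩,
    (LieMap.injective_onOmega_iff _).2 (by simp [LieMap.detModC])⟩ <;>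
  ext t <;> fin_cases t <;> simp <;> ring

lemma isomorphic_addX (r q : ZMod p) : Isomorphic θ (θ.addX r q) := by
  refine ⟨⟨Pi.single 0 1, ![0, 1, r, q], Pi.single 2 1, Pi.single 3 1, ?_, ?_, ?_, ?_, ?_, ?_⟩,
    (LieMap.injective_onOmega_iff _).2 (by simp [LieMap.detModC])⟩ <;>
  ext t <;> fin_cases t <;> simp <;> ring

lemma isomorphic_addY (r q : ZMod p) : Isomorphic θ (θ.addY r q) := by
  refine ⟨⟨Pi.single 0 1, Pi.single 1 1, ![q, 0, 1, r], ![0, 0, 0, 1], ?_, ?_, ?_, ?_, ?_, ?_⟩,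
    (LieMap.injective_onOmega_iff _).2 (by simp [LieMap.detModC])⟩ <;>
  ext t <;> fin_cases t <;> simp <;> ring

lemma isomorphic_addU (r : ZMod p) : Isomorphic θ (θ.addU r) := by
  refine ⟨⟨Pi.single 0 1, Pi.single 1 1, ![0, 0, 1, 0], ![r, 0, 0, 1], ?_, ?_, ?_, ?_, ?_, ?_⟩,
    (LieMap.injective_onOmega_iff _).2 (by simp [LieMap.detModC])⟩ <;>
  ext t <;> fin_cases t <;> simp <;> ring

variable {θ}

lemma isomorphic_swapXY (hxuc : θ.xuc = 0) (haxy : θ.axy = 0) :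
    Isomorphic θ (θ.swapXY hxuc) := by
  refine ⟨⟨Pi.single 0 1, Pi.single 2 1, Pi.single 1 1, Pi.single 3 1, ?_, ?_, ?_, ?_, ?_, ?_⟩,
    (LieMap.injective_onOmega_iff _).2 (by simp [LieMap.detModC])⟩ <;>
  ext t <;> fin_cases t <;> simp [hxuc, haxy]

lemma isomorphic_swapYU (hxyu : θ.xyu = 0) (hayu : θ.ayu = 0) : Isomorphic θ θ.swapYU := by
  refine ⟨⟨Pi.single 0 1, Pi.single 1 1, Pi.single 3 1, Pi.single 2 1, ?_, ?_, ?_, ?_, ?_, ?_⟩,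
    (LieMap.injective_onOmega_iff _).2 (by simp [LieMap.detModC])⟩ <;>
  ext t <;> fin_cases t <;> simp [hxyu, hayu]

lemma isomorphic_of_scale {θ θ' : LieConst p} {k i j l : ZMod p} (hk : k ≠ 0) (hi : i ≠ 0)
    (hj : j ≠ 0) (hl : l ≠ 0) (hxyu : θ'.xyu * l = i * j * θ.xyu)
    (hxyc : θ'.xyc * k = i * j * θ.xyc) (hxuc : θ'.xuc * k = i * l * θ.xuc)
    (hayu : θ'.ayu * l = k * j * θ.ayu) (hayc : θ'.ayc = j * θ.ayc) (hauc : θ'.auc = l * θ.auc)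
    (haxy : θ'.axy * j = k * i * θ.axy) (haxu : θ'.axu * l = k * i * θ.axu)
    (haxc : θ'.axc = i * θ.axc) : Isomorphic θ θ' := by
  refine ⟨⟨Pi.single 0 k, Pi.single 1 i, Pi.single 2 j, Pi.single 3 l, ?_, ?_, ?_, ?_, ?_, ?_⟩,
    (LieMap.injective_onOmega_iff _).2 ⟨by simpa, by simp [LieMap.detModC, hi, hj, hl]⟩⟩ <;>
  ext t <;> fin_cases t <;> simp <;> grind

end Moves

/-- The normal form of the structure constants for which `[x, y]` is central. -/
@[simps] def central (xyc ayu auc axy : ZMod p) : LieConst p where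
  xyu := 0
  xyc := xyc
  xuc := 0
  ayu := ayu
  ayc := 0
  auc := auc
  axy := axy
  axu := 0
  axc := 0
  jacobi := by simp

/-- The normal form of the structure constants for which `[x, y]` is not central. -/
@[simps] def noncentral (xuc ayc axy : ZMod p) : LieConst p where
  xyu := 1
  xyc := 0
  xuc := xuc
  ayu := 0
  ayc := ayc
  auc := 0
  axy := axy
  axu := 0
  axc := 0
  jacobi := by simp

/-- The Lie ring of `θ` has a basis with structure constants in one of the two normal forms. -/
def HasNormalForm (θ : LieConst p) : Prop :=
  (∃ e h l n, Isomorphic θ (central e h l n)) ∨ ∃ k m n, Isomorphic θ (noncentral k m n)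

section Reduction

variable [Fact p.Prime] {θ θ' : LieConst p}

lemma hasNormalForm_of_xyu_ne_zero_of_eq_zero (hxyu : θ.xyu ≠ 0) (hxyc : θ.xyc = 0)
    (hayu : θ.ayu = 0) (hauc : θ.auc = 0) (haxu : θ.axu = 0) (haxc : θ.axc = 0) :
    HasNormalForm θ :=
  .inr ⟨θ.xuc * θ.xyu, θ.ayc, θ.axy, isomorphic_of_scale one_ne_zero one_ne_zero one_ne_zero hxyu
    (by simp) (by simp [hxyc]) (by simp [mul_comm]) (by simp [hayu]) (by simp) (by simp [hauc])
    (by simp) (by simp [haxu]) (by simp [haxc])⟩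

variable [Fact (5 ≤ p)]

lemma Isomorphic.hasNormalForm (h : Isomorphic θ θ') (hθ' : HasNormalForm θ') :
    HasNormalForm θ :=
  hθ'.imp (fun ⟨e, a, l, n, h'⟩ => ⟨e, a, l, n, h.trans h'⟩)
    fun ⟨k, m, n, h'⟩ => ⟨k, m, n, h.trans h'⟩

lemma hasNormalForm_of_eq_central (hxyu : θ.xyu = 0) (hxuc : θ.xuc = 0) (hayc : θ.ayc = 0)
    (haxu : θ.axu = 0) (haxc : θ.axc = 0) : HasNormalForm θ := by
  have hθ : θ = central θ.xyc θ.ayu θ.auc θ.axy := by ext <;> simp [*]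
  refine .inl ⟨θ.xyc, θ.ayu, θ.auc, θ.axy, ?_⟩
  rw [← hθ]

lemma hasNormalForm_of_xyu_ne_zero_of_xuc_ne_zero (hxyu : θ.xyu ≠ 0) (hxuc : θ.xuc ≠ 0) :
    HasNormalForm θ := by
  suffices H : ∀ {η : LieConst p}, η.xyu ≠ 0 → η.xuc ≠ 0 → η.xyc = 0 → HasNormalForm η from
    (θ.isomorphic_addY (-θ.xyc / θ.xuc) 0).hasNormalForm (H hxyu hxuc (by simp [hxuc]))
  intro η hxyu hxuc hxyc
  have hayu : η.ayu = η.auc * η.xyu / η.xuc := by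
    field_simp
    linear_combination -η.jacobi
  refine (η.isomorphic_addA (-η.auc / η.xuc) (η.axu / η.xyu) (η.axc / η.xuc)).hasNormalForm
    (hasNormalForm_of_xyu_ne_zero_of_eq_zero hxyu ?_ ?_ ?_ ?_ ?_)
  · simp [hxyc]
  · simp [hayu]
    ring
  all_goals simp [*]

lemma hasNormalForm_of_xyu_ne_zero_of_xuc_eq_zero (hxyu : θ.xyu ≠ 0) (hxuc : θ.xuc = 0) :
    HasNormalForm θ := by
  suffices H : ∀ {η : LieConst p}, η.xyu ≠ 0 → η.xuc = 0 → η.auc = 0 → η.xyc = 0 → η.ayu = 0 →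
      η.axu = 0 → HasNormalForm η by
    have hauc : θ.auc = 0 := by simpa [hxuc, hxyu] using θ.jacobi
    refine (θ.isomorphic_addU (θ.xyc / θ.xyu)).hasNormalForm
      ((isomorphic_addA _ (-θ.ayu / θ.xyu) (θ.axu / θ.xyu) 0).hasNormalForm (H ?_ ?_ ?_ ?_ ?_ ?_))
    all_goals simp [*]
  intro η hxyu hxuc hauc hxyc hayu haxu
  by_cases haxy : η.axy = 0
  · by_cases hayc : η.ayc = 0
    · refine (isomorphic_swapXY hxuc haxy).hasNormalForm
        (hasNormalForm_of_xyu_ne_zero_of_eq_zero ?_ ?_ ?_ ?_ ?_ ?_)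
      all_goals simp [*]
    · refine (η.isomorphic_addX (-η.axc / η.ayc) 0).hasNormalForm
        (hasNormalForm_of_xyu_ne_zero_of_eq_zero ?_ ?_ ?_ ?_ ?_ ?_)
      all_goals simp [*]
  · refine (η.isomorphic_addY 0 (η.axc / η.axy)).hasNormalForm
      (hasNormalForm_of_xyu_ne_zero_of_eq_zero ?_ ?_ ?_ ?_ ?_ ?_)
    all_goals simp [*]

lemma hasNormalForm_of_xyc_ne_zero_of_xuc_eq_zero (hxyu : θ.xyu = 0) (hxyc : θ.xyc ≠ 0)
    (hxuc : θ.xuc = 0) : HasNormalForm θ := by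
  have H : ∀ {η : LieConst p}, η.xyu = 0 → η.xyc ≠ 0 → η.xuc = 0 → η.axu = 0 →
      HasNormalForm η := by
    intro η hxyu hxyc hxuc haxu
    refine (η.isomorphic_addA (-η.ayc / η.xyc) (η.axc / η.xyc) 0).hasNormalForm
      (hasNormalForm_of_eq_central ?_ ?_ ?_ ?_ ?_)
    all_goals simp [*]
  by_cases haxy : θ.axy = 0
  · by_cases hayu : θ.ayu = 0
    · exact (isomorphic_swapXY hxuc haxy).hasNormalForm
        (H (by simp [hxyu]) (by simp [hxyc]) (by simp) (by simp [hayu]))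
    · exact (θ.isomorphic_addX (-θ.axu / θ.ayu) 0).hasNormalForm
        (H hxyu hxyc hxuc (by simp [hayu]))
  · exact (θ.isomorphic_addY (θ.axu / θ.axy) 0).hasNormalForm
      (H hxyu (by simp [hxuc, hxyc]) hxuc (by simp [haxy]))

lemma hasNormalForm_of_xyu_eq_zero_of_xuc_ne_zero (hxyu : θ.xyu = 0) (hxuc : θ.xuc ≠ 0) :
    HasNormalForm θ := by
  have hayu : θ.ayu = 0 := by simpa [hxyu, hxuc] using θ.jacobi
  refine (θ.isomorphic_addY (-θ.xyc / θ.xuc) 0).hasNormalForm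
    ((isomorphic_swapYU ?_ ?_).hasNormalForm
      (hasNormalForm_of_xyc_ne_zero_of_xuc_eq_zero ?_ ?_ ?_))
  all_goals simp [*]

/-- The elements `x`, `y` and `u` commute. -/
def IsCommXYU (θ : LieConst p) : Prop := θ.xyu = 0 ∧ θ.xyc = 0 ∧ θ.xuc = 0

namespace IsCommXYU

lemma hasNormalForm_of_auc_ne_zero (hθ : IsCommXYU θ) (hauc : θ.auc ≠ 0) : HasNormalForm θ := by
  suffices H : ∀ {η : LieConst p}, IsCommXYU η → η.ayc = 0 → η.axc = 0 → HasNormalForm η by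
    obtain ⟨hxyu, hxyc, hxuc⟩ := hθ
    let η := θ.addY (-θ.ayc / θ.auc) 0
    refine (isomorphic_addY _ _ _).hasNormalForm
      ((η.isomorphic_addX 0 (-η.axc / η.auc)).hasNormalForm (H ⟨?_, ?_, ?_⟩ ?_ ?_))
    all_goals simp [η, *]
  rintro η ⟨hxyu, hxyc, hxuc⟩ hayc haxc
  by_cases haxu : η.axu = 0
  · exact hasNormalForm_of_eq_central hxyu hxuc hayc haxu haxc
  by_cases hayu : η.ayu = 0
  · refine (isomorphic_swapYU hxyu hayu).hasNormalForm
      ((isomorphic_addY _ (η.axy / η.axu) 0).hasNormalForm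
        ((isomorphic_swapYU ?_ ?_).hasNormalForm
          ((isomorphic_swapXY ?_ ?_).hasNormalForm (hasNormalForm_of_eq_central ?_ ?_ ?_ ?_ ?_))))
    all_goals simp [*]
  · refine (η.isomorphic_addX (-η.axu / η.ayu) 0).hasNormalForm
      (hasNormalForm_of_eq_central ?_ ?_ ?_ ?_ ?_)
    all_goals simp [*]

lemma hasNormalForm_of_ayu_ne_zero (hθ : IsCommXYU θ) (hauc : θ.auc = 0) (hayu : θ.ayu ≠ 0) :
    HasNormalForm θ := by
  suffices H : ∀ {η : LieConst p}, IsCommXYU η → η.auc = 0 → η.ayc = 0 → η.axu = 0 →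
      HasNormalForm η by
    obtain ⟨hxyu, hxyc, hxuc⟩ := hθ
    refine (θ.isomorphic_addU (θ.ayc / θ.ayu)).hasNormalForm
      ((isomorphic_addX _ (-θ.axu / θ.ayu) 0).hasNormalForm (H ⟨?_, ?_, ?_⟩ ?_ ?_ ?_))
    all_goals simp [*]
  rintro η ⟨hxyu, hxyc, hxuc⟩ hauc hayc haxu
  by_cases haxy : η.axy = 0
  · refine (isomorphic_swapXY hxuc haxy).hasNormalForm ((isomorphic_swapYU ?_ ?_).hasNormalForm
      (hasNormalForm_of_eq_central ?_ ?_ ?_ ?_ ?_))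
    all_goals simp [*]
  · refine (η.isomorphic_addY 0 (η.axc / η.axy)).hasNormalForm
      (hasNormalForm_of_eq_central ?_ ?_ ?_ ?_ ?_)
    all_goals simp [*]

lemma hasNormalForm_of_ay_eq_zero (hθ : IsCommXYU θ) (hauc : θ.auc = 0) (hayu : θ.ayu = 0)
    (hayc : θ.ayc = 0) : HasNormalForm θ := by
  have H : ∀ {η : LieConst p}, IsCommXYU η → η.auc = 0 → η.ayc = 0 → η.axy ≠ 0 →
      HasNormalForm η := by
    rintro η ⟨hxyu, -, hxuc⟩ hauc hayc haxy
    refine (η.isomorphic_addY (η.axu / η.axy) (η.axc / η.axy)).hasNormalForm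
      (hasNormalForm_of_eq_central ?_ ?_ ?_ ?_ ?_)
    all_goals simp [*]
  by_cases haxy : θ.axy = 0
  · obtain ⟨hxyu, hxyc, hxuc⟩ := hθ
    by_cases haxu : θ.axu = 0
    · refine (isomorphic_swapXY hxuc haxy).hasNormalForm ((isomorphic_swapYU ?_ ?_).hasNormalForm
        (hasNormalForm_of_eq_central ?_ ?_ ?_ ?_ ?_))
      all_goals simp [*]
    · exact (isomorphic_swapYU hxyu hayu).hasNormalForm
        (H ⟨rfl, hxuc, hxyc⟩ hayc hauc haxu)
  · exact H hθ hauc hayc haxy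

lemma hasNormalForm (hθ : IsCommXYU θ) : HasNormalForm θ := by
  by_cases hauc : θ.auc = 0
  · by_cases hayu : θ.ayu = 0
    · by_cases hayc : θ.ayc = 0
      · exact hθ.hasNormalForm_of_ay_eq_zero hauc hayu hayc
      · exact (isomorphic_swapYU hθ.1 hayu).hasNormalForm
          (hasNormalForm_of_auc_ne_zero ⟨rfl, hθ.2.2, hθ.2.1⟩ hayc)
    · exact hθ.hasNormalForm_of_ayu_ne_zero hauc hayu
  · exact hθ.hasNormalForm_of_auc_ne_zero hauc

end IsCommXYU

lemma hasNormalForm (θ : LieConst p) : HasNormalForm θ := by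
  by_cases hxyu : θ.xyu = 0 <;> by_cases hxuc : θ.xuc = 0
  · by_cases hxyc : θ.xyc = 0
    · exact IsCommXYU.hasNormalForm ⟨hxyu, hxyc, hxuc⟩
    · exact hasNormalForm_of_xyc_ne_zero_of_xuc_eq_zero hxyu hxyc hxuc
  · exact hasNormalForm_of_xyu_eq_zero_of_xuc_ne_zero hxyu hxuc
  · exact hasNormalForm_of_xyu_ne_zero_of_xuc_eq_zero hxyu hxuc
  · exact hasNormalForm_of_xyu_ne_zero_of_xuc_ne_zero hxyu hxuc

end Reduction

variable [Fact p.Prime]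

section Central

variable {e h l n e' h' l' n' : ZMod p}

lemma isomorphic_central_of_scale {k i j m : ZMod p} (hk : k ≠ 0) (hi : i ≠ 0) (hj : j ≠ 0)
    (hm : m ≠ 0) (he : e' * k = i * j * e) (hh : h' * m = k * j * h) (hl : l' = m * l)
    (hn : n' * j = k * i * n) : Isomorphic (central e h l n) (central e' h' l' n') :=
  isomorphic_of_scale hk hi hj hm (by simp) he (by simp) hh (by simp) hl hn (by simp) (by simp)

lemma central_relations (B : LieMap (central e h l n) (central e' h' l' n')) :
    e * (B.X 1 * B.Y 2 - B.X 2 * B.Y 1) = e' * B.A 0 ∧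
    e * (B.X 1 * B.U 2 - B.X 2 * B.U 1) = 0 ∧ e * (B.Y 1 * B.U 2 - B.Y 2 * B.U 1) = 0 ∧
    e * (B.A 1 * B.X 2 - B.A 2 * B.X 1) + l * (B.A 0 * B.X 3) = n' * B.Y 0 ∧
    n' * B.Y 1 = 0 ∧ n * (B.A 0 * B.X 1) = n' * B.Y 2 ∧ h * (B.A 0 * B.X 2) = n' * B.Y 3 ∧
    e * (B.A 1 * B.Y 2 - B.A 2 * B.Y 1) + l * (B.A 0 * B.Y 3) = h' * B.U 0 ∧
    h' * B.U 1 = 0 ∧ n * (B.A 0 * B.Y 1) = h' * B.U 2 ∧ h * (B.A 0 * B.Y 2) = h' * B.U 3 ∧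
    e * (B.A 1 * B.U 2 - B.A 2 * B.U 1) + l * (B.A 0 * B.U 3) = l' * B.A 0 ∧
    n * (B.A 0 * B.U 1) = 0 ∧ h * (B.A 0 * B.U 2) = 0 := by
  simpa [funext_iff, Fin.forall_fin_succ, and_assoc] using
    And.intro B.bracket_xy <| And.intro B.bracket_xu <| And.intro B.bracket_yu <|
      And.intro B.bracket_ax <| And.intro B.bracket_ay B.bracket_au

lemma Isomorphic.exists_scale_central_of_ne_zero
    (H : Isomorphic (central e h l n) (central e' h' l' n')) (he : e ≠ 0) :
    ∃ k i j m : ZMod p, k ≠ 0 ∧ i ≠ 0 ∧ j ≠ 0 ∧ m ≠ 0 ∧ e' * k = i * j * e ∧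
      h' * m = k * j * h ∧ l' = m * l ∧ n' * j = k * i * n := by
  obtain ⟨B, hB⟩ := H
  obtain ⟨hk, hdet⟩ := B.injective_onOmega_iff.1 hB
  obtain ⟨hxy, hxu, hyu, -, hax1, hax2, hax3, -, hay1, hay2, hay3, hau, -, -⟩ :=
    central_relations B
  have hu1 : B.U 1 = 0 := by grind [LieMap.detModC]
  have hu2 : B.U 2 = 0 := by grind [LieMap.detModC]
  have hdet' : B.detModC = B.U 3 * (B.X 1 * B.Y 2 - B.X 2 * B.Y 1) := by
    rw [LieMap.detModC, hu1, hu2]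
    ring
  obtain ⟨hu3, hD⟩ := mul_ne_zero_iff.1 (hdet' ▸ hdet)
  have hl : l' = B.U 3 * l := by grind
  by_cases hhn : h = 0 ∧ n' = 0
  · obtain ⟨rfl, rfl⟩ := hhn
    refine ⟨B.A 0, B.X 1 * B.Y 2 - B.X 2 * B.Y 1, 1, B.U 3, hk, hD, one_ne_zero, hu3, ?_⟩
    grind
  · have h1 : B.X 1 * B.Y 2 = B.X 1 * B.Y 2 - B.X 2 * B.Y 1 := by grind
    refine ⟨B.A 0, B.X 1, B.Y 2, B.U 3, hk, ?_, ?_, hu3, ?_⟩ <;> grind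

lemma Isomorphic.central_eq_zero_imp
    (H : Isomorphic (central 0 h l n) (central e' h' l' n'))
    (hθ : ¬(h ≠ 0 ∧ l = 0 ∧ n = 0)) (hθ' : ¬(e' = 0 ∧ h' ≠ 0 ∧ l' = 0 ∧ n' = 0)) :
    e' = 0 ∧ (h = 0 → h' = 0) ∧ (l = 0 → l' = 0) ∧ (n = 0 → n' = 0) := by
  obtain ⟨B, hB⟩ := H
  obtain ⟨hk, hdet⟩ := B.injective_onOmega_iff.1 hB
  obtain ⟨hxy, -, -, hax0, hax1, hax2, hax3, hay0, hay1, hay2, hay3, hau, hau2, hau3⟩ :=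
    central_relations B
  rw [LieMap.detModC] at hdet
  have he' : e' = 0 := by grind
  have hh : h = 0 → h' ≠ 0 → B.U 1 = 0 ∧ B.U 3 = 0 := by grind
  have hn : n = 0 → n' ≠ 0 → B.Y 1 = 0 ∧ B.Y 2 = 0 := by grind
  exact ⟨he', by grind, by grind, by grind⟩

lemma exists_ne_zero_eq_mul {r r' : ZMod p} (h : r = 0 ↔ r' = 0) : ∃ t ≠ 0, r' = t * r := by
  by_cases hr : r = 0
  · exact ⟨1, one_ne_zero, by simp [h.1 hr, hr]⟩
  · exact ⟨r' / r, div_ne_zero (mt h.2 hr) hr, by field_simp⟩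

lemma isomorphic_central_iff [Fact (5 ≤ p)] (hθ : ¬(e = 0 ∧ h ≠ 0 ∧ l = 0 ∧ n = 0))
    (hθ' : ¬(e' = 0 ∧ h' ≠ 0 ∧ l' = 0 ∧ n' = 0)) :
    Isomorphic (central e h l n) (central e' h' l' n') ↔
      ∃ k i j m : ZMod p, k ≠ 0 ∧ i ≠ 0 ∧ j ≠ 0 ∧ m ≠ 0 ∧ e' * k = i * j * e ∧
        h' * m = k * j * h ∧ l' = m * l ∧ n' * j = k * i * n := by
  refine ⟨fun H => ?_, fun ⟨k, i, j, m, hk, hi, hj, hm, he, hh, hl, hn⟩ =>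
    isomorphic_central_of_scale hk hi hj hm he hh hl hn⟩
  by_cases he : e = 0
  · subst he
    obtain ⟨rfl, hh, hl, hn⟩ := H.central_eq_zero_imp (by simpa using hθ) hθ'
    obtain ⟨-, hh', hl', hn'⟩ := H.symm.central_eq_zero_imp (by simpa using hθ') hθ
    obtain ⟨m, hm, hlm⟩ := exists_ne_zero_eq_mul ⟨hl, hl'⟩
    obtain ⟨s, hs, hhs⟩ := exists_ne_zero_eq_mul ⟨hh, hh'⟩
    obtain ⟨t, ht, hnt⟩ := exists_ne_zero_eq_mul ⟨hn, hn'⟩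
    exact ⟨1, t * (s * m), s * m, m, one_ne_zero, mul_ne_zero ht (mul_ne_zero hs hm),
      mul_ne_zero hs hm, hm, by simp, by rw [hhs]; ring,
      hlm, by rw [hnt]; ring⟩
  · exact H.exists_scale_central_of_ne_zero he

end Central

section Noncentral

variable {k m n k' m' n' : ZMod p}

lemma noncentral_relations (B : LieMap (noncentral k m n) (noncentral k' m' n')) :
    k * (B.X 1 * B.Y 3 - B.X 3 * B.Y 1) = B.U 0 ∧ 0 = B.U 1 ∧ 0 = B.U 2 ∧
    B.X 1 * B.Y 2 - B.X 2 * B.Y 1 = B.U 3 ∧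
    k * (B.X 1 * B.U 3 - B.X 3 * B.U 1) = k' * B.A 0 ∧ B.X 1 * B.U 2 - B.X 2 * B.U 1 = 0 ∧
    k * (B.Y 1 * B.U 3 - B.Y 3 * B.U 1) = 0 ∧ B.Y 1 * B.U 2 - B.Y 2 * B.U 1 = 0 ∧
    k * (B.A 1 * B.X 3 - B.A 3 * B.X 1) + m * (B.A 0 * B.X 2) = n' * B.Y 0 ∧ n' * B.Y 1 = 0 ∧
    n * (B.A 0 * B.X 1) = n' * B.Y 2 ∧ B.A 1 * B.X 2 - B.A 2 * B.X 1 = n' * B.Y 3 ∧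
    k * (B.A 1 * B.Y 3 - B.A 3 * B.Y 1) + m * (B.A 0 * B.Y 2) = m' * B.A 0 ∧
    n * (B.A 0 * B.Y 1) = 0 ∧ B.A 1 * B.Y 2 - B.A 2 * B.Y 1 = 0 ∧
    k * (B.A 1 * B.U 3 - B.A 3 * B.U 1) + m * (B.A 0 * B.U 2) = 0 ∧
    n * (B.A 0 * B.U 1) = 0 ∧ B.A 1 * B.U 2 - B.A 2 * B.U 1 = 0 := by
  simpa [funext_iff, Fin.forall_fin_succ, and_assoc] using
    And.intro B.bracket_xy <| And.intro B.bracket_xu <| And.intro B.bracket_yu <|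
      And.intro B.bracket_ax <| And.intro B.bracket_ay B.bracket_au

lemma isomorphic_noncentral_iff :
    Isomorphic (noncentral k m n) (noncentral k' m' n') ↔
      ∃ r i j : ZMod p, r ≠ 0 ∧ i ≠ 0 ∧ j ≠ 0 ∧ k' * r = i ^ 2 * j * k ∧ m' = j * m ∧
        n' * j = r * i * n := by
  refine ⟨fun ⟨B, hB⟩ => ?_, fun ⟨r, i, j, hr, hi, hj, hk, hm, hn⟩ =>
    isomorphic_of_scale hr hi hj (mul_ne_zero hi hj) (by simp) (by simp)
      (by simp only [noncentral_xuc]; linear_combination hk) (by simp) hm (by simp) hn (by simp)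
      (by simp)⟩
  obtain ⟨ha, hdet⟩ := B.injective_onOmega_iff.1 hB
  obtain ⟨-, hu1, hu2, hxy3, hxu, -, hyu, -, hax0, hax1, hax2, -, hay0, hay2, -, hau, -, -⟩ :=
    noncentral_relations B
  have hu3 : B.U 3 ≠ 0 := by grind [LieMap.detModC]
  have hk1 : k * B.A 1 = 0 := by grind
  by_cases hy1 : B.Y 1 = 0
  · refine ⟨B.A 0, B.X 1, B.Y 2, ha, ?_, ?_, ?_⟩ <;> grind
  have hk : k = 0 := by grind
  have hn : n = 0 := by grind
  have hn' : n' = 0 := by grind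
  by_cases hy2 : B.Y 2 = 0
  · have hm : m = 0 := by grind
    exact ⟨1, 1, 1, by grind⟩
  · exact ⟨1, 1, B.Y 2, by grind⟩

end Noncentral

lemma not_isomorphic_central_noncentral {e h l n k m n' : ZMod p} :
    ¬Isomorphic (central e h l n) (noncentral k m n') := by
  rintro ⟨B, hB⟩
  have hu1 : 0 = B.U 1 := by simpa using congr_fun B.bracket_xy 1
  have hu2 : 0 = B.U 2 := by simpa using congr_fun B.bracket_xy 2
  have hu3 : 0 = B.U 3 := by simpa using congr_fun B.bracket_xy 3
  exact (B.injective_onOmega_iff.1 hB).2 (by simp [LieMap.detModC, ← hu1, ← hu2, ← hu3])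

end LieConst

section PowerOrbits

variable {p : ℕ} [Fact p.Prime] {k : ℕ}

/-- The orbits of `𝔽_p` under multiplication by `k`-th powers of units: `none` is the orbit of `0`,
and the other orbits are the cosets of the `k`-th powers in the unit group. -/
abbrev PowerOrbit (p k : ℕ) : Type :=
  Option ((ZMod p)ˣ ⧸ (powMonoidHom k : (ZMod p)ˣ →* (ZMod p)ˣ).range)

/-- A representative of a power orbit. -/
noncomputable def PowerOrbit.out : PowerOrbit p k → ZMod p
  | none => 0
  | some q => (q.out : (ZMod p)ˣ)

lemma PowerOrbit.out_eq_zero {q : PowerOrbit p k} : q.out = 0 ↔ q = none := by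
  cases q with
  | none => simp [PowerOrbit.out]
  | some q => simp [PowerOrbit.out]

lemma PowerOrbit.exists_out_eq (r : ZMod p) :
    ∃ (q : PowerOrbit p k) (t : (ZMod p)ˣ), q.out = t ^ k * r := by
  by_cases hr : r = 0
  · exact ⟨none, 1, by simp [PowerOrbit.out, hr]⟩
  · let u := Units.mk0 r hr
    obtain ⟨⟨-, t, rfl⟩, ht⟩ := QuotientGroup.mk_out_eq_mul (powMonoidHom k).range u
    refine ⟨some (u : (ZMod p)ˣ ⧸ (powMonoidHom k).range), t, ?_⟩
    simp [PowerOrbit.out, ht, u, mul_comm]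

lemma PowerOrbit.eq_of_out_eq {q q' : PowerOrbit p k} {t : ZMod p} (ht : t ≠ 0)
    (h : q'.out = t ^ k * q.out) : q = q' := by
  cases q with
  | none => cases q' <;> simp_all [PowerOrbit.out]
  | some q =>
    cases q' with
    | none => simp_all [PowerOrbit.out]
    | some q' =>
      have hu : q'.out = Units.mk0 t ht ^ k * q.out := Units.ext (by simpa [PowerOrbit.out] using h)
      rw [← q.out_eq', ← q'.out_eq', hu]
      exact congr_arg some (QuotientGroup.eq.2 ⟨Units.mk0 t ht, by simp [mul_comm]⟩)

lemma card_powerOrbit : Nat.card (PowerOrbit p k) = Nat.gcd (p - 1) k + 1 := by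
  have h := IsCyclic.index_powMonoidHom_range (G := (ZMod p)ˣ) k
  rw [Nat.card_eq_fintype_card, ZMod.card_units] at h
  rw [Finite.card_option, ← h]
  rfl

end PowerOrbits

lemma exists_ne_zero_mul_eq_cond {F : Type*} [Field F] (r : F) :
    ∃ t ≠ 0, ∃ b : Bool, t * r = cond b 1 0 := by
  by_cases hr : r = 0
  · exact ⟨1, one_ne_zero, false, by simp [hr]⟩
  · exact ⟨r⁻¹, inv_ne_zero hr, true, inv_mul_cancel₀ hr⟩

namespace LieConst

variable {p : ℕ}

/-- The central normal form with `[x, y] = r • c` whose other three structure constants are `0`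
or `1`, as recorded by `t`. -/
def centralForm (t : Bool × Bool × Bool) (r : ZMod p) : LieConst p :=
  central r (cond t.1 1 0) (cond t.2.1 1 0) (cond t.2.2 1 0)

/-- The noncentral normal form with `[x, u] = r • c` whose other two free structure constants are
`0` or `1`, as recorded by `t`. -/
def noncentralForm (t : Bool × Bool) (r : ZMod p) : LieConst p :=
  noncentral r (cond t.1 1 0) (cond t.2 1 0)

/-- The exponent `k` such that `centralForm t r` determines `r` up to `k`-th powers of units. -/
def centralExponent : Bool × Bool × Bool → ℕ
  | (true, true, true) => 4
  | (_, _, true) => 2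
  | (_, _, false) => 1

/-- The exponent `k` such that `noncentralForm t r` determines `r` up to `k`-th powers of units. -/
def noncentralExponent : Bool × Bool → ℕ
  | (_, true) => 3
  | (_, false) => 1

variable [Fact p.Prime]

section Central

variable {t t' : Bool × Bool × Bool} {r r' s : ZMod p}

lemma exists_isomorphic_centralForm (e h l n : ZMod p) :
    ∃ t r, Isomorphic (central e h l n) (centralForm t r) := by
  obtain ⟨a, ha, bh, hh⟩ := exists_ne_zero_mul_eq_cond h
  obtain ⟨b, hb, bl, hl⟩ := exists_ne_zero_mul_eq_cond l
  obtain ⟨c, hc, bn, hn⟩ := exists_ne_zero_mul_eq_cond n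
  refine ⟨(bh, bl, bn), c * (a * b) * (a * b) * e, isomorphic_central_of_scale (k := 1)
    (i := c * (a * b)) (j := a * b) (m := b) one_ne_zero (by simp [*]) (by simp [*]) hb
    (by ring) ?_ hl.symm ?_⟩
  · rw [← hh]; ring
  · rw [← hn]; ring

lemma isomorphic_centralForm_pow_mul (t : Bool × Bool × Bool) (r : ZMod p) (hs : s ≠ 0) :
    Isomorphic (centralForm t r) (centralForm t (s ^ centralExponent t * r)) := by
  obtain ⟨h, l, n⟩ := t
  have key {k i j m : ZMod p} (hk : k ≠ 0) (hi : i ≠ 0) (hj : j ≠ 0) (hm : m ≠ 0) :=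
    isomorphic_central_of_scale (e := r) (h := cond h 1 0) (l := cond l 1 0) (n := cond n 1 0)
      (e' := s ^ centralExponent (h, l, n) * r) (h' := cond h 1 0) (l' := cond l 1 0)
      (n' := cond n 1 0) hk hi hj hm
  cases n with
  | false =>
    exact key one_ne_zero hs one_ne_zero one_ne_zero (by simp [centralExponent]) (by simp)
      (by simp) (by simp)
  | true =>
    cases h with
    | false =>
      exact key one_ne_zero hs hs one_ne_zero (by simp [centralExponent, sq]) (by simp) (by simp)
        (by simp)
    | true =>
      cases l with
      | false =>
        exact key one_ne_zero hs hs hs (by simp [centralExponent, sq]) (by simp) (by simp)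
          (by simp)
      | true =>
        exact key (inv_ne_zero hs) (pow_ne_zero 2 hs) hs one_ne_zero
          (by rw [centralExponent]; field_simp) (by simp [hs]) (by simp) (by field_simp)

lemma Isomorphic.centralForm_rigid [Fact (5 ≤ p)] (hr : t = (true, false, false) → r ≠ 0)
    (hr' : t' = (true, false, false) → r' ≠ 0)
    (H : Isomorphic (centralForm t r) (centralForm t' r')) :
    t = t' ∧ ∃ s ≠ 0, r' = s ^ centralExponent t * r := by
  obtain ⟨h, l, n⟩ := t
  obtain ⟨h', l', n'⟩ := t'
  obtain ⟨k, i, j, m, hk, hi, hj, hm, he, hh, hl, hn⟩ := (isomorphic_central_iff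
    (by cases h <;> cases l <;> cases n <;> simp_all)
    (by cases h' <;> cases l' <;> cases n' <;> simp_all)).1 H
  obtain rfl : h = h' := by cases h <;> cases h' <;> simp_all
  obtain rfl : l = l' := by cases l <;> cases l' <;> simp_all
  obtain rfl : n = n' := by cases n <;> cases n' <;> simp_all
  refine ⟨rfl, ?_⟩
  cases n with
  | false =>
    exact ⟨i * j / k, by simp [*], by rw [centralExponent]; field_simp; linear_combination he⟩
  | true =>
    obtain rfl : j = k * i := by simpa using hn
    have he2 : r' = i ^ 2 * r := mul_right_cancel₀ hk (by linear_combination he)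
    cases h with
    | false => exact ⟨i, hi, he2⟩
    | true =>
      cases l with
      | false => exact ⟨i, hi, he2⟩
      | true =>
        obtain rfl : 1 = m := by simpa using hl
        have hki : 1 = k * (k * i) := by simpa using hh
        have hi2 : i = k⁻¹ ^ 2 := by field_simp; linear_combination -hki
        exact ⟨k⁻¹, inv_ne_zero hk, by rw [he2, hi2, centralExponent]; ring⟩

end Central

section Noncentral

variable {t t' : Bool × Bool} {r r' s : ZMod p}

lemma exists_isomorphic_noncentralForm (k m n : ZMod p) :
    ∃ t r, Isomorphic (noncentral k m n) (noncentralForm t r) := by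
  obtain ⟨a, ha, bm, hm⟩ := exists_ne_zero_mul_eq_cond m
  obtain ⟨b, hb, bn, hn⟩ := exists_ne_zero_mul_eq_cond n
  refine ⟨(bm, bn), (a * b) ^ 2 * a * k, isomorphic_noncentral_iff.2
    ⟨1, a * b, a, one_ne_zero, mul_ne_zero ha hb, ha, by ring, hm.symm, ?_⟩⟩
  rw [← hn]; ring

lemma isomorphic_noncentralForm_pow_mul (t : Bool × Bool) (r : ZMod p) (hs : s ≠ 0) :
    Isomorphic (noncentralForm t r) (noncentralForm t (s ^ noncentralExponent t * r)) := by
  obtain ⟨m, n⟩ := t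
  refine isomorphic_noncentral_iff.2 ?_
  cases n with
  | false =>
    exact ⟨s⁻¹, 1, 1, by simp [hs], one_ne_zero, one_ne_zero,
      by rw [noncentralExponent]; field_simp, by simp, by simp⟩
  | true =>
    exact ⟨s⁻¹, s, 1, by simp [hs], hs, one_ne_zero, by rw [noncentralExponent]; field_simp,
      by simp, by simp [hs]⟩

lemma Isomorphic.noncentralForm_rigid (H : Isomorphic (noncentralForm t r) (noncentralForm t' r')) :
    t = t' ∧ ∃ s ≠ 0, r' = s ^ noncentralExponent t * r := by
  obtain ⟨m, n⟩ := t
  obtain ⟨m', n'⟩ := t'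
  obtain ⟨a, i, j, ha, hi, hj, hk, hm, hn⟩ := isomorphic_noncentral_iff.1 H
  obtain rfl : m = m' := by cases m <;> cases m' <;> simp_all
  obtain rfl : n = n' := by cases n <;> cases n' <;> simp_all
  refine ⟨rfl, ?_⟩
  cases n with
  | false =>
    exact ⟨i ^ 2 * j / a, by simp [*],
      by rw [noncentralExponent]; field_simp; linear_combination hk⟩
  | true =>
    obtain rfl : j = a * i := by simpa using hn
    exact ⟨i, hi, mul_right_cancel₀ ha (by rw [noncentralExponent]; linear_combination hk)⟩

end Noncentral

/-- The index set of a complete irredundant list of the structure constants up to isomorphism. The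
excluded central form, with `[a, y] = u` its only nonzero bracket, is isomorphic to the one whose
only nonzero bracket is `[a, x] = y`. -/
abbrev Label (p : ℕ) : Type :=
  {s : Σ t, PowerOrbit p (centralExponent t) // s ≠ ⟨(true, false, false), none⟩} ⊕
    Σ t, PowerOrbit p (noncentralExponent t)

/-- The normal form with a given label. -/
noncomputable def Label.form : Label p → LieConst p
  | .inl s => centralForm s.1.1 s.1.2.out
  | .inr s => noncentralForm s.1 s.2.out

section Classification

variable [Fact (5 ≤ p)]

lemma isomorphic_centralForm_zero :
    Isomorphic (centralForm (true, false, false) 0 : LieConst p)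
      (centralForm (false, false, true) 0) := by
  have h := (isomorphic_swapXY rfl rfl).trans
    (isomorphic_swapYU (θ := (centralForm (true, false, false) 0 : LieConst p).swapXY rfl)
      (by simp [centralForm]) rfl)
  convert h using 1
  ext <;> simp [centralForm]

lemma exists_isomorphic_form_of_centralForm (t : Bool × Bool × Bool) (r : ZMod p) :
    ∃ L : Label p, Isomorphic (centralForm t r) L.form := by
  obtain ⟨q, s, hq⟩ := PowerOrbit.exists_out_eq (k := centralExponent t) r
  have h : Isomorphic (centralForm t r) (centralForm t q.out) :=
    hq ▸ isomorphic_centralForm_pow_mul t r s.ne_zero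
  by_cases hne : (⟨t, q⟩ : Σ t, PowerOrbit p (centralExponent t)) = ⟨(true, false, false), none⟩
  · obtain ⟨rfl, hq'⟩ := Sigma.mk.inj_iff.1 hne
    obtain rfl := eq_of_heq hq'
    exact ⟨.inl ⟨⟨(false, false, true), none⟩, by simp⟩, h.trans isomorphic_centralForm_zero⟩
  · exact ⟨.inl ⟨⟨t, q⟩, hne⟩, h⟩

lemma exists_isomorphic_form (θ : LieConst p) : ∃ L : Label p, Isomorphic θ L.form := by
  obtain ⟨e, h, l, n, H⟩ | ⟨k, m, n, H⟩ := θ.hasNormalForm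
  · obtain ⟨t, r, H'⟩ := exists_isomorphic_centralForm e h l n
    exact (exists_isomorphic_form_of_centralForm t r).imp fun L hL => H.trans (H'.trans hL)
  · obtain ⟨t, r, H'⟩ := exists_isomorphic_noncentralForm k m n
    obtain ⟨q, s, hq⟩ := PowerOrbit.exists_out_eq (k := noncentralExponent t) r
    have h : Isomorphic (noncentralForm t r) (noncentralForm t q.out) :=
      hq ▸ isomorphic_noncentralForm_pow_mul t r s.ne_zero
    exact ⟨.inr ⟨t, q⟩, H.trans (H'.trans h)⟩

lemma Label.eq_of_isomorphic {L L' : Label p} (H : Isomorphic L.form L'.form) : L = L' := by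
  have hne {t : Bool × Bool × Bool} {q : PowerOrbit p (centralExponent t)}
      (h : (⟨t, q⟩ : Σ t, PowerOrbit p (centralExponent t)) ≠ ⟨(true, false, false), none⟩) :
      t = (true, false, false) → q.out ≠ 0 := by
    rintro rfl hq
    exact h (by rw [PowerOrbit.out_eq_zero.1 hq])
  match L, L' with
  | .inl ⟨⟨t, q⟩, h⟩, .inl ⟨⟨t', q'⟩, h'⟩ =>
    obtain ⟨rfl, s, hs, hq⟩ := Isomorphic.centralForm_rigid (hne h) (hne h') H
    obtain rfl := PowerOrbit.eq_of_out_eq hs hq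
    rfl
  | .inl _, .inr _ => exact absurd H not_isomorphic_central_noncentral
  | .inr _, .inl _ => exact absurd H.symm not_isomorphic_central_noncentral
  | .inr ⟨t, q⟩, .inr ⟨t', q'⟩ =>
    obtain ⟨rfl, s, hs, hq⟩ := Isomorphic.noncentralForm_rigid H
    obtain rfl := PowerOrbit.eq_of_out_eq hs hq
    rfl

end Classification

lemma card_label (hp : p ≠ 2) :
    Nat.card (Label p) = 23 + 2 * Nat.gcd (p - 1) 3 + Nat.gcd (p - 1) 4 := by
  have hgcd : Nat.gcd (p - 1) 2 = 2 :=
    Nat.gcd_eq_right (even_iff_two_dvd.1 (Fact.out (p := p.Prime).even_sub_one hp))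
  have hcentral :
      Nat.card (Σ t, PowerOrbit p (centralExponent t)) = 18 + Nat.gcd (p - 1) 4 := by
    simp only [Nat.card_sigma, card_powerOrbit, Fintype.sum_prod_type, Fintype.sum_bool,
      centralExponent, hgcd, Nat.gcd_one_right]
    ring
  have hnoncentral :
      Nat.card (Σ t, PowerOrbit p (noncentralExponent t)) = 6 + 2 * Nat.gcd (p - 1) 3 := by
    simp only [Nat.card_sigma, card_powerOrbit, Fintype.sum_prod_type, Fintype.sum_bool,
      noncentralExponent, Nat.gcd_one_right]
    ring
  have hne := Nat.card_congr
    (Equiv.optionSubtypeNe (⟨(true, false, false), none⟩ : Σ t, PowerOrbit p (centralExponent t)))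
  rw [Finite.card_option, hcentral] at hne
  rw [Nat.card_sum, hnoncentral]
  omega

end LieConst

/-! ### Counting isomorphism classes -/

lemma card_quot_mulEquiv {X : Type} {Q : Group X → Prop} {ι : Type*} (G : ι → Type*)
    [∀ i, Group (G i)] (e : ∀ i, Nonempty (X ≃ G i))
    (hQ : ∀ s : Group X, Q s ↔ ∃ i, Nonempty (X ≃* G i))
    (hG : ∀ i j, Nonempty (G i ≃* G j) → i = j) :
    Nat.card (Quot fun s t : {s : Group X // Q s} =>
      Nonempty (@MulEquiv X X (mulOfGroup X s.1) (mulOfGroup X t.1))) = Nat.card ι := by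
  choose f hf using fun s : {s // Q s} => (hQ s.1).1 s.2
  let r (s t : {s // Q s}) : Prop :=
    Nonempty (@MulEquiv X X (mulOfGroup X s.1) (mulOfGroup X t.1))
  have hr {s t : {s // Q s}} : r s t ↔ f s = f t := by
    obtain ⟨fs⟩ := hf s
    obtain ⟨ft⟩ := hf t
    let _ := mulOfGroup X s.1
    refine ⟨fun ⟨g⟩ => hG _ _ ⟨fs.symm.trans (@MulEquiv.trans _ _ _ _ (mulOfGroup X t.1) _ g ft)⟩,
      fun h => ?_⟩
    rw [← h] at ft
    exact ⟨@MulEquiv.trans _ _ _ _ _ (mulOfGroup X t.1) fs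
      (@MulEquiv.symm _ _ (mulOfGroup X t.1) _ ft)⟩
  refine Nat.card_congr (Equiv.ofBijective (Quot.lift f fun s t => hr.1 : Quot r → ι) ⟨?_, ?_⟩)
  · rintro ⟨s⟩ ⟨t⟩ hst
    exact Quot.sound (hr.2 hst)
  · intro i
    obtain ⟨e⟩ := e i
    let s : Group X := e.group
    have hs : Q s := (hQ s).2 ⟨i, ⟨e.mulEquiv⟩⟩
    exact ⟨Quot.mk r ⟨s, hs⟩, hG _ _ ⟨(hf ⟨s, hs⟩).some.symm.trans e.mulEquiv⟩⟩

section Counting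

variable {p : ℕ} [Fact p.Prime] [Fact (5 ≤ p)] {d : ℕ}

theorem isRegularPGroup_and_hasTypeInvariants_iff {G : Type} [Group G]
    (hG : Nat.card G = p ^ (d + 5)) :
    IsRegularPGroup p G ∧ HasTypeInvariants p G [d + 2, 1, 1, 1] ↔
      ∃ L : LieConst.Label p, Nonempty (G ≃* BCHGroup d L.form) := by
  refine ⟨fun ⟨hreg, hT⟩ => ?_, fun ⟨L, ⟨f⟩⟩ =>
    BCHGroup.isRegularPGroup_and_hasTypeInvariants_of_mulEquiv f⟩
  obtain ⟨θ, ⟨f⟩⟩ := hreg.exists_mulEquiv_bchGroup hT hG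
  obtain ⟨L, hL⟩ := LieConst.exists_isomorphic_form θ
  obtain ⟨g⟩ := (LieConst.isomorphic_iff_nonempty_mulEquiv d).1 hL
  exact ⟨L, ⟨f.trans g⟩⟩

theorem psiType_eq_card_label : PsiType p (d + 2) [1, 1, 1] = Nat.card (LieConst.Label p) := by
  refine card_quot_mulEquiv (fun L : LieConst.Label p => BCHGroup d L.form)
    (fun L => Finite.card_eq.1 ?_)
    (fun s => isRegularPGroup_and_hasTypeInvariants_iff (Nat.card_fin _))
    fun L L' H => LieConst.Label.eq_of_isomorphic
      ((LieConst.isomorphic_iff_nonempty_mulEquiv d).2 H)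
  rw [BCHGroup.card_eq, Nat.card_fin]
  simp [add_assoc]

end Counting

/-- For every prime `p ≥ 5` and every `n ≥ 5`,
`Ψ_{n-3}^p(1,1,1) = 23 + 2·gcd(p-1,3) + gcd(p-1,4)`. -/
theorem psi_type_111 (p : ℕ) (hp : p.Prime) (hp5 : 5 ≤ p) (n : ℕ) (hn : 5 ≤ n) :
    PsiType p (n - 3) [1, 1, 1] = 23 + 2 * Nat.gcd (p - 1) 3 + Nat.gcd (p - 1) 4 := by
  obtain ⟨d, rfl⟩ := Nat.exists_eq_add_of_le' hn
  have : Fact p.Prime := ⟨hp⟩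
  have : Fact (5 ≤ p) := ⟨hp5⟩
  exact psiType_eq_card_label.trans (LieConst.card_label (by omega))
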